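/- arXiv:1306.0435 — 10 statements merged into one kernel-verified Lean document; each statement's English description precedes it below -/
import Mathlib

section
/- Let Q ∈ L²_unif(ℝ) and u ∈ H¹(ℝ). Then for every ε ∈ (0,1] one has |∫_ℝ Q(x) · conj(u'(x)) · u(x) dx| ≤ ‖Q‖_{L²_unif(ℝ)} · ( ε ‖u'‖²_{L²(ℝ)} + 4 ε^{−3} ‖u‖²_{L²(ℝ)} ). -/
open MeasureTheory

/-- The Stepanov `L²_unif` norm: `(sup_t ∫_t^{t+1} |Q|²)^{1/2}`. -/
noncomputable def stepL2 (Q : ℝ → ℂ) : ℝ :=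
  Real.sqrt (⨆ t : ℝ, ∫ s in t..(t + 1), ‖Q s‖ ^ 2)

/-- The Stepanov `L¹_unif` norm: `sup_t ∫_t^{t+1} |τ|`. -/
noncomputable def stepL1 (τ : ℝ → ℂ) : ℝ :=
  ⨆ t : ℝ, ∫ s in t..(t + 1), ‖τ s‖

/-- Membership in the Stepanov space `L²_unif(ℝ)`: locally square integrable with
finite Stepanov norm. -/
def InStepL2 (Q : ℝ → ℂ) : Prop :=
  AEStronglyMeasurable Q volume ∧
  LocallyIntegrable (fun s => ‖Q s‖ ^ 2) volume ∧
  BddAbove (Set.range fun t : ℝ => ∫ s in t..(t + 1), ‖Q s‖ ^ 2)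

/-- Membership in the Stepanov space `L¹_unif(ℝ)`: locally integrable with
finite Stepanov norm. -/
def InStepL1 (τ : ℝ → ℂ) : Prop :=
  LocallyIntegrable τ volume ∧
  BddAbove (Set.range fun t : ℝ => ∫ s in t..(t + 1), ‖τ s‖)

/-- `u ∈ H¹(ℝ)` with derivative `u'`: `u` is absolutely continuous with
`u x = u 0 + ∫_0^x u'`, and both `u` and `u'` are square integrable. -/
def InH1 (u u' : ℝ → ℂ) : Prop :=
  LocallyIntegrable u' volume ∧
  (∀ x : ℝ, u x = u 0 + ∫ s in (0:ℝ)..x, u' s) ∧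
  MemLp u 2 volume ∧ MemLp u' 2 volume


lemma aux_CS (μ : Measure ℝ) (f g : ℝ → ℂ) (hf : MemLp f 2 μ) (hg : MemLp g 2 μ) :
    ∫ x, ‖f x‖ * ‖g x‖ ∂μ ≤ √(∫ x, ‖f x‖ ^ 2 ∂μ) * √(∫ x, ‖g x‖ ^ 2 ∂μ) := by
  have h := integral_mul_norm_le_Lp_mul_Lq (μ := μ) (f := f) (g := g) (p := 2) (q := 2)
    Real.HolderConjugate.two_two (by simpa using hf) (by simpa using hg)
  simpa [Real.sqrt_eq_rpow] using h

lemma aux_sup (u u' : ℝ → ℂ) (hu : InH1 u u') (a h x : ℝ) (hh : 0 < h)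
    (hx : x ∈ Set.Icc a (a + h)) :
    ‖u x‖ * h ≤ √h * √(∫ y in Set.Ioc a (a + h), ‖u y‖ ^ 2) +
      h * (√h * √(∫ y in Set.Ioc a (a + h), ‖u' y‖ ^ 2)) := by
  obtain ⟨hloc, hFTC, h2, h2'⟩ := hu
  have hint : ∀ p q : ℝ, IntervalIntegrable u' volume p q := fun p q =>
    (hloc.integrableOn_isCompact isCompact_uIcc).intervalIntegrable
  have hfin : IsFiniteMeasure (volume.restrict (Set.Ioc a (a + h))) := by infer_instance
  have key : ∀ v : ℝ → ℂ, MemLp v 2 volume → ∫ y in Set.Ioc a (a + h), ‖v y‖ ≤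
      √h * √(∫ y in Set.Ioc a (a + h), ‖v y‖ ^ 2) := by
    intro v hv
    have := aux_CS (volume.restrict (Set.Ioc a (a + h))) (fun _ => 1) v (memLp_const _) (hv.restrict _)
    simpa [hh.le] using this
  have hiu : Integrable (fun y => ‖u y‖) (volume.restrict (Set.Ioc a (a + h))) :=
    ((h2.restrict _).integrable one_le_two).norm
  have hiu' : Integrable (fun y => ‖u' y‖) (volume.restrict (Set.Ioc a (a + h))) :=
    ((h2'.restrict _).integrable one_le_two).norm
  have hpt : ∀ y ∈ Set.Ioc a (a + h), ‖u x‖ ≤ ‖u y‖ + ∫ s in Set.Ioc a (a + h), ‖u' s‖ := by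
    intro y hy
    have e : u x = u y + ∫ s in y..x, u' s := by
      rw [hFTC x, hFTC y, add_assoc, intervalIntegral.integral_add_adjacent_intervals (hint _ _) (hint _ _)]
    rw [e]
    refine (norm_add_le _ _).trans ?_
    gcongr
    refine intervalIntegral.norm_integral_le_integral_norm_uIoc.trans ?_
    refine setIntegral_mono_set hiu' (Filter.Eventually.of_forall fun _ => norm_nonneg _) ?_
    refine HasSubset.Subset.eventuallyLE ?_
    intro s hs
    rw [Set.mem_uIoc] at hs
    simp only [Set.mem_Icc, Set.mem_Ioc] at *
    rcases hs with hs | hs <;> constructor <;> linarith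
  have := setIntegral_mono_on (μ := volume) (s := Set.Ioc a (a + h)) (f := fun _ => ‖u x‖)
    (g := fun y => ‖u y‖ + ∫ s in Set.Ioc a (a + h), ‖u' s‖) (integrable_const _)
    (hiu.add (integrable_const _)) measurableSet_Ioc hpt
  rw [integral_add hiu (integrable_const _)] at this
  simp [hh.le] at this
  have k1 := key u h2
  have k2 := mul_le_mul_of_nonneg_left (key u' h2') hh.le
  linarith

lemma aux_cell (Q u u' : ℝ → ℂ) (hQ : InStepL2 Q) (hu : InH1 u u')
    (ε : ℝ) (hε : 0 < ε) (hε1 : ε ≤ 1) (t : ℝ)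
    (hF : Integrable (fun x => Q x * (starRingEnd ℂ) (u' x) * u x)) :
    ∫ x in t..(t + 1), ‖Q x * (starRingEnd ℂ) (u' x) * u x‖ ≤
      stepL2 Q * (ε * (∫ x in t..(t + 1), ‖u' x‖ ^ 2) +
        4 * ε⁻¹ ^ 3 * (∫ x in t..(t + 1), ‖u x‖ ^ 2)) := by
  obtain ⟨hQm, hQl, hQb⟩ := hQ
  have hu0 := hu
  obtain ⟨hloc, hFTC, h2, h2'⟩ := hu
  have ht : t ≤ t + 1 := by linarith
  have hQ1 : √(∫ x in Set.Ioc t (t + 1), ‖Q x‖ ^ 2) ≤ stepL2 Q := by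
    apply Real.sqrt_le_sqrt
    rw [← intervalIntegral.integral_of_le ht]
    exact le_ciSup hQb t
  simp only [intervalIntegral.integral_of_le ht]
  have hI : ∀ v : ℝ → ℂ, MemLp v 2 volume → Integrable (fun x => ‖v x‖ ^ 2) volume :=
    fun v hv => (memLp_two_iff_integrable_sq_norm hv.1).1 hv
  have hQ2 : MemLp Q 2 (volume.restrict (Set.Ioc t (t + 1))) := by
    refine (memLp_two_iff_integrable_sq_norm hQm.restrict).2 ?_
    exact (hQl.integrableOn_isCompact isCompact_Icc).mono_set Set.Ioc_subset_Icc_self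
  set A := √(∫ x in Set.Ioc t (t + 1), ‖u' x‖ ^ 2) with hA
  set B := √(∫ x in Set.Ioc t (t + 1), ‖u x‖ ^ 2) with hB
  have hA2 : ∫ x in Set.Ioc t (t + 1), ‖u' x‖ ^ 2 = A ^ 2 :=
    (Real.sq_sqrt (integral_nonneg fun _ => by positivity)).symm
  have hB2 : ∫ x in Set.Ioc t (t + 1), ‖u x‖ ^ 2 = B ^ 2 :=
    (Real.sq_sqrt (integral_nonneg fun _ => by positivity)).symm
  have hA0 : 0 ≤ A := Real.sqrt_nonneg _
  have hB0 : 0 ≤ B := Real.sqrt_nonneg _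
  rw [hA2, hB2]
  have hsup : ∀ x ∈ Set.Ioc t (t + 1), ‖u x‖ ≤ 2 / ε * B + ε / 2 * A := by
    intro x hx
    have hh : 0 < (ε / 2) ^ 2 := by positivity
    have hh1 : (ε / 2) ^ 2 ≤ 1 := by nlinarith
    obtain ⟨a, ha1, ha2, ha3⟩ : ∃ a, t ≤ a ∧ a + (ε / 2) ^ 2 ≤ t + 1 ∧
        x ∈ Set.Icc a (a + (ε / 2) ^ 2) := by
      rcases le_total (x + (ε / 2) ^ 2) (t + 1) with h | h
      · exact ⟨x, hx.1.le, h, le_rfl, by linarith⟩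
      · exact ⟨t + 1 - (ε / 2) ^ 2, by linarith, by linarith, by linarith, by linarith [hx.2]⟩
    have h1 := aux_sup u u' hu0 a _ x hh ha3
    rw [Real.sqrt_sq (by positivity)] at h1
    have mono : ∀ v : ℝ → ℂ, MemLp v 2 volume →
        √(∫ y in Set.Ioc a (a + (ε / 2) ^ 2), ‖v y‖ ^ 2) ≤ √(∫ y in Set.Ioc t (t + 1), ‖v y‖ ^ 2) := by
      intro v hv
      apply Real.sqrt_le_sqrt
      refine setIntegral_mono_set (hI v hv).integrableOn
        (Filter.Eventually.of_forall fun _ => by positivity) ?_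
      exact (Set.Ioc_subset_Ioc ha1 ha2).eventuallyLE
    have m1 := mono u h2
    have m2 := mono u' h2'
    have h3 : ‖u x‖ * (ε / 2) ^ 2 ≤ (2 / ε * B + ε / 2 * A) * (ε / 2) ^ 2 := by
      refine h1.trans ?_
      have e : (2 / ε * B + ε / 2 * A) * (ε / 2) ^ 2 =
          (ε / 2) * B + (ε / 2) ^ 2 * ((ε / 2) * A) := by field_simp
      rw [e]
      gcongr
    exact le_of_mul_le_mul_right h3 hh
  set M := 2 / ε * B + ε / 2 * A with hM
  have hM0 : 0 ≤ M := by positivity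
  have hu'2 : MemLp u' 2 (volume.restrict (Set.Ioc t (t + 1))) := h2'.restrict _
  have hCS := aux_CS _ Q u' hQ2 hu'2
  have hQu : Integrable (fun x => ‖Q x‖ * ‖u' x‖) (volume.restrict (Set.Ioc t (t + 1))) :=
    hQ2.norm.integrable_mul hu'2.norm
  have step : ∫ x in Set.Ioc t (t + 1), ‖Q x * (starRingEnd ℂ) (u' x) * u x‖ ≤
      ∫ x in Set.Ioc t (t + 1), ‖Q x‖ * ‖u' x‖ * M := by
    refine setIntegral_mono_on hF.norm.integrableOn (hQu.mul_const M) measurableSet_Ioc ?_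
    intro x hx
    rw [norm_mul, norm_mul, RCLike.norm_conj]
    gcongr
    exact hsup x hx
  rw [integral_mul_const] at step
  have hS : 0 ≤ stepL2 Q := Real.sqrt_nonneg _
  have hfinal : A * M ≤ ε * A ^ 2 + 4 * ε⁻¹ ^ 3 * B ^ 2 := by
    have e : ε * A ^ 2 + 4 * ε⁻¹ ^ 3 * B ^ 2 - A * M =
        ε / 2 * (A - 2 * B / ε ^ 2) ^ 2 + 2 * ε⁻¹ ^ 3 * B ^ 2 := by
      rw [hM]; field_simp; ring
    have : 0 ≤ ε / 2 * (A - 2 * B / ε ^ 2) ^ 2 + 2 * ε⁻¹ ^ 3 * B ^ 2 := by positivity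
    linarith
  calc _ ≤ _ := step
    _ ≤ (stepL2 Q * A) * M := by
      gcongr
      exact hCS.trans (by gcongr)
    _ = stepL2 Q * (A * M) := by ring
    _ ≤ _ := by gcongr

/-- Estimate `|(Q, conj(u')u)_{L²}| ≤ ‖Q‖_{L²_unif} (ε‖u'‖² + 4ε⁻³‖u‖²)` for `ε ∈ (0,1]`. -/
theorem Q_form_estimate (Q u u' : ℝ → ℂ) (hQ : InStepL2 Q) (hu : InH1 u u')
    (ε : ℝ) (hε : 0 < ε) (hε1 : ε ≤ 1) :
    ‖∫ x : ℝ, Q x * (starRingEnd ℂ) (u' x) * u x‖ ≤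
      stepL2 Q * (ε * (∫ x : ℝ, ‖u' x‖ ^ 2) + 4 * ε⁻¹ ^ 3 * (∫ x : ℝ, ‖u x‖ ^ 2)) := by
  have hS : 0 ≤ stepL2 Q := Real.sqrt_nonneg _
  by_cases hF : Integrable (fun x => Q x * (starRingEnd ℂ) (u' x) * u x)
  · refine (norm_integral_le_integral_norm _).trans ?_
    have i1 := (memLp_two_iff_integrable_sq_norm hu.2.2.1.1).1 hu.2.2.1
    have i2 := (memLp_two_iff_integrable_sq_norm hu.2.2.2.1).1 hu.2.2.2
    have s0 := hF.norm.hasSum_intervalIntegral 0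
    have s1 := i1.hasSum_intervalIntegral 0
    have s2 := i2.hasSum_intervalIntegral 0
    refine hasSum_le (fun n : ℤ => ?_) s0
      (((s2.mul_left ε).add (s1.mul_left (4 * ε⁻¹ ^ 3))).mul_left (stepL2 Q))
    have := aux_cell Q u u' hQ hu ε hε hε1 (0 + n) hF
    simpa [add_assoc] using this
  · rw [integral_undef hF, norm_zero]
    have j1 : 0 ≤ ∫ x : ℝ, ‖u' x‖ ^ 2 := integral_nonneg fun _ => by positivity
    have j2 : 0 ≤ ∫ x : ℝ, ‖u x‖ ^ 2 := integral_nonneg fun _ => by positivity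
    positivity
end

section
/- Let τ ∈ L¹_unif(ℝ) and u ∈ H¹(ℝ). Then for every η ∈ (0,1] one has |∫_ℝ τ(x) |u(x)|² dx| ≤ ‖τ‖_{L¹_unif(ℝ)} · ( η ‖u'‖²_{L²(ℝ)} + 8 η^{−1} ‖u‖²_{L²(ℝ)} ). -/
open MeasureTheory

lemma aux_pointwise (u u' : ℝ → ℂ) (hu : InH1 u u') (h : ℝ) (hh : 0 < h) (x : ℝ) :
    ‖u x‖ ^ 2 ≤ ∫ s in Set.Icc x (x + h), (2 * h * ‖u' s‖ ^ 2 + 2 * h⁻¹ * ‖u s‖ ^ 2) := by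
  obtain ⟨hl, hint, hu2, hu'2⟩ := hu
  have hU : Integrable (fun s => ‖u s‖ ^ 2) := hu2.integrable_norm_pow (by norm_num)
  have hU' : Integrable (fun s => ‖u' s‖ ^ 2) := hu'2.integrable_norm_pow (by norm_num)
  have hN : IntegrableOn (fun s => ‖u' s‖) (Set.Icc x (x + h)) :=
    (hl.integrableOn_isCompact isCompact_Icc).norm
  have hvol : (volume.restrict (Set.Icc x (x + h))).real Set.univ = h := by
    simp [Measure.real, hh.le]
  set A := ∫ s in Set.Icc x (x + h), ‖u' s‖ with hA
  set B := ∫ s in Set.Icc x (x + h), ‖u' s‖ ^ 2 with hB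
  set C := ∫ s in Set.Icc x (x + h), ‖u s‖ ^ 2 with hC
  have hCS : A ^ 2 ≤ h * B := by
    have h0 : 0 ≤ ∫ s in Set.Icc x (x + h), (‖u' s‖ ^ 2 - (2 * (A / h)) * ‖u' s‖ + (A / h) ^ 2) := by
      apply integral_nonneg
      intro s
      have := sq_nonneg (‖u' s‖ - A / h)
      simp only [Pi.zero_apply]
      nlinarith
    have hsub : IntegrableOn (fun s => ‖u' s‖ ^ 2 - (2 * (A / h)) * ‖u' s‖) (Set.Icc x (x + h)) :=
      hU'.integrableOn.sub (hN.const_mul _)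
    rw [integral_add hsub (integrable_const _),
      integral_sub hU'.integrableOn (hN.const_mul _), integral_const_mul, integral_const, hvol,
      ← hA, ← hB, smul_eq_mul] at h0
    have : B - 2 * (A / h) * A + h * (A / h) ^ 2 = B - A ^ 2 / h := by field_simp; ring
    rw [this] at h0
    have h1 : A ^ 2 / h ≤ B := by linarith
    rw [div_le_iff₀ hh] at h1
    linarith
  have hpt : ∀ y ∈ Set.Icc x (x + h), ‖u x‖ ^ 2 ≤ 2 * ‖u y‖ ^ 2 + 2 * A ^ 2 := by
    intro y hy
    have hii : ∀ a b, IntervalIntegrable u' volume a b := fun a b =>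
      (hl.integrableOn_isCompact isCompact_uIcc).intervalIntegrable
    have e : u x = u y - ∫ s in x..y, u' s := by
      rw [hint x, hint y, ← intervalIntegral.integral_add_adjacent_intervals (hii 0 x) (hii x y)]
      ring
    have h2 : ‖∫ s in x..y, u' s‖ ≤ A := by
      refine (intervalIntegral.norm_integral_le_integral_norm hy.1).trans ?_
      rw [intervalIntegral.integral_of_le hy.1]
      exact setIntegral_mono_set hN (Filter.Eventually.of_forall fun s => norm_nonneg _)
        (LE.le.eventuallyLE
          (Set.Ioc_subset_Icc_self.trans (Set.Icc_subset_Icc_right hy.2)))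
    have h3 : ‖u x‖ ≤ ‖u y‖ + A := by
      rw [e]; exact (norm_sub_le _ _).trans (by linarith)
    have := norm_nonneg (u x)
    nlinarith [sq_nonneg (‖u y‖ - A), norm_nonneg (u y)]
  have hI : ∫ s in Set.Icc x (x + h), ‖u x‖ ^ 2 ≤
      ∫ s in Set.Icc x (x + h), (2 * ‖u s‖ ^ 2 + 2 * A ^ 2) :=
    setIntegral_mono_on (integrable_const _)
      ((hU.integrableOn.const_mul _).add (integrable_const _)) measurableSet_Icc hpt
  rw [integral_add (hU.integrableOn.const_mul _) (integrable_const _), integral_const_mul,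
    integral_const, integral_const, hvol, smul_eq_mul, smul_eq_mul, ← hC] at hI
  rw [integral_add (hU'.integrableOn.const_mul _) (hU.integrableOn.const_mul _),
    integral_const_mul, integral_const_mul, ← hB, ← hC]
  have h5 : h * ‖u x‖ ^ 2 ≤ h * (2 * h * B + 2 * h⁻¹ * C) := by
    have : h * (2 * h * B + 2 * h⁻¹ * C) = h * (2 * (h * B)) + 2 * C := by field_simp
    rw [this]
    nlinarith
  exact le_of_mul_le_mul_left h5 hh

lemma aux_tau (τ : ℝ → ℂ) (hτ : InStepL1 τ) (h : ℝ) (hh : h ≤ 1) (s : ℝ) :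
    ∫⁻ x in Set.Icc (s - h) s, ‖τ x‖ₑ ≤ ENNReal.ofReal (stepL1 τ) := by
  calc ∫⁻ x in Set.Icc (s - h) s, ‖τ x‖ₑ
      ≤ ∫⁻ x in Set.Icc (s - h) (s - h + 1), ‖τ x‖ₑ :=
        lintegral_mono_set (Set.Icc_subset_Icc_right (by linarith))
    _ = ENNReal.ofReal (∫ x in Set.Icc (s - h) (s - h + 1), ‖τ x‖) :=
        (ofReal_integral_norm_eq_lintegral_enorm
          (hτ.1.integrableOn_isCompact isCompact_Icc)).symm
    _ ≤ ENNReal.ofReal (stepL1 τ) := by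
        apply ENNReal.ofReal_le_ofReal
        rw [integral_Icc_eq_integral_Ioc, ← intervalIntegral.integral_of_le (by linarith)]
        exact le_ciSup hτ.2 (s - h)

/-- Estimate `|(τ, |u|²)_{L²}| ≤ ‖τ‖_{L¹_unif} (η‖u'‖² + 8η⁻¹‖u‖²)` for `η ∈ (0,1]`. -/
theorem tau_form_estimate (τ u u' : ℝ → ℂ) (hτ : InStepL1 τ) (hu : InH1 u u')
    (η : ℝ) (hη : 0 < η) (hη1 : η ≤ 1) :
    ‖∫ x : ℝ, τ x * (‖u x‖ : ℂ) ^ 2‖ ≤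
      stepL1 τ * (η * (∫ x : ℝ, ‖u' x‖ ^ 2) + 8 * η⁻¹ * (∫ x : ℝ, ‖u x‖ ^ 2)) := by
  have hU : Integrable (fun s => ‖u s‖ ^ 2) := hu.2.2.1.integrable_norm_pow (by norm_num)
  have hU' : Integrable (fun s => ‖u' s‖ ^ 2) := hu.2.2.2.integrable_norm_pow (by norm_num)
  set h := η / 2 with hh
  have hpos : 0 < h := by positivity
  set g : ℝ → ℝ := fun s => 2 * h * ‖u' s‖ ^ 2 + 2 * h⁻¹ * ‖u s‖ ^ 2 with hg
  have hgI : Integrable g := (hU'.const_mul _).add (hU.const_mul _)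
  have hg0 : ∀ s, 0 ≤ g s := fun s => by positivity
  have hS0 : 0 ≤ stepL1 τ := Real.iSup_nonneg fun t =>
    intervalIntegral.integral_nonneg (by linarith) fun s _ => norm_nonneg _
  have key : ‖∫ x : ℝ, τ x * (‖u x‖ : ℂ) ^ 2‖ₑ ≤ ENNReal.ofReal (stepL1 τ * ∫ s, g s) := by
    set G : ℝ → ENNReal := fun s => ENNReal.ofReal (g s) with hG
    have hGm : AEMeasurable G := hgI.aestronglyMeasurable.aemeasurable.ennreal_ofReal
    have hτm : AEMeasurable (fun x => ‖τ x‖ₑ) := hτ.1.aestronglyMeasurable.enorm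
    have hset : MeasurableSet {p : ℝ × ℝ | p.2 ∈ Set.Icc p.1 (p.1 + h)} :=
      (measurableSet_le measurable_fst measurable_snd).inter
        (measurableSet_le measurable_snd (measurable_fst.add_const h))
    calc ‖∫ x : ℝ, τ x * (‖u x‖ : ℂ) ^ 2‖ₑ
        ≤ ∫⁻ x, ‖τ x * (‖u x‖ : ℂ) ^ 2‖ₑ := enorm_integral_le_lintegral_enorm _
      _ ≤ ∫⁻ x, ∫⁻ s, {p : ℝ × ℝ | p.2 ∈ Set.Icc p.1 (p.1 + h)}.indicator
            (fun p => ‖τ p.1‖ₑ * G p.2) (x, s) := by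
          apply lintegral_mono
          intro x
          have e1 : ∫⁻ s, {p : ℝ × ℝ | p.2 ∈ Set.Icc p.1 (p.1 + h)}.indicator
              (fun p => ‖τ p.1‖ₑ * G p.2) (x, s)
              = ‖τ x‖ₑ * ∫⁻ s in Set.Icc x (x + h), G s := by
            rw [← lintegral_const_mul'' _ hGm.restrict, ← lintegral_indicator measurableSet_Icc]
            rfl
          have e2 : ∫⁻ s in Set.Icc x (x + h), G s
              = ENNReal.ofReal (∫ s in Set.Icc x (x + h), g s) :=
            (ofReal_integral_eq_lintegral_ofReal hgI.integrableOn
              (Filter.Eventually.of_forall hg0)).symm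
          simp only [e1, e2, enorm_mul]
          gcongr
          rw [← ofReal_norm]
          apply ENNReal.ofReal_le_ofReal
          have := aux_pointwise u u' hu h hpos x
          simpa using this
      _ = ∫⁻ s, ∫⁻ x, {p : ℝ × ℝ | p.2 ∈ Set.Icc p.1 (p.1 + h)}.indicator
            (fun p => ‖τ p.1‖ₑ * G p.2) (x, s) := by
          apply lintegral_lintegral_swap
            (f := fun x s => {p : ℝ × ℝ | p.2 ∈ Set.Icc p.1 (p.1 + h)}.indicator
            (fun p => ‖τ p.1‖ₑ * G p.2) (x, s))
          exact ((hτm.comp_fst).mul (hGm.comp_snd)).indicator hset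
      _ ≤ ∫⁻ s, ENNReal.ofReal (stepL1 τ) * G s := by
          apply lintegral_mono
          intro s
          have e1 : ∫⁻ x, {p : ℝ × ℝ | p.2 ∈ Set.Icc p.1 (p.1 + h)}.indicator
              (fun p => ‖τ p.1‖ₑ * G p.2) (x, s)
              = (∫⁻ x in Set.Icc (s - h) s, ‖τ x‖ₑ) * G s := by
            rw [← lintegral_mul_const'' _ hτm.restrict, ← lintegral_indicator measurableSet_Icc]
            congr 1
            ext x
            have : s ∈ Set.Icc x (x + h) ↔ x ∈ Set.Icc (s - h) s := by
              simp only [Set.mem_Icc]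
              constructor <;> rintro ⟨a, b⟩ <;> constructor <;> linarith
            simp only [Set.indicator_apply, Set.mem_ofPred_eq, this]
          simp only [e1]
          gcongr
          exact aux_tau τ hτ h (by rw [hh]; linarith) s
      _ = ENNReal.ofReal (stepL1 τ * ∫ s, g s) := by
          rw [lintegral_const_mul'' _ hGm, ENNReal.ofReal_mul hS0,
            ofReal_integral_eq_lintegral_ofReal hgI (Filter.Eventually.of_forall hg0)]
  have hI0 : 0 ≤ ∫ s, g s := integral_nonneg hg0
  rw [← ofReal_norm, ENNReal.ofReal_le_ofReal_iff (mul_nonneg hS0 hI0)] at key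
  refine key.trans (mul_le_mul_of_nonneg_left ?_ hS0)
  rw [hg, integral_add (hU'.const_mul _) (hU.const_mul _), integral_const_mul, integral_const_mul]
  have hC : 0 ≤ ∫ x, ‖u x‖ ^ 2 := integral_nonneg fun s => by positivity
  have e1 : 2 * h = η := by rw [hh]; ring
  have e2 : 2 * h⁻¹ = 4 * η⁻¹ := by rw [hh]; field_simp; norm_num
  rw [e1, e2]
  have : 0 ≤ η⁻¹ * ∫ x, ‖u x‖ ^ 2 := by positivity
  linarith
end

section
/- Let Q ∈ L²_unif(ℝ), τ ∈ L¹_unif(ℝ), set K := 2(‖Q‖_{L²_unif(ℝ)} + ‖τ‖_{L¹_unif(ℝ)}), and for u ∈ H¹(ℝ) define t_{Q,τ}[u] := −∫_ℝ Q(x)( conj(u'(x)) u(x) + conj(u(x)) u'(x) ) dx + ∫_ℝ τ(x) |u(x)|² dx. Then for every ε ∈ (0,1] and every u ∈ H¹(ℝ): | t_{Q,τ}[u] | ≤ K ε ‖u'‖²_{L²(ℝ)} + 4 K ε^{−3} ‖u‖²_{L²(ℝ)}. -/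
open MeasureTheory

/-- The constant `K = 2(‖Q‖_{L²_unif} + ‖τ‖_{L¹_unif})`. -/
noncomputable def Kc (Q τ : ℝ → ℂ) : ℝ := 2 * (stepL2 Q + stepL1 τ)

/-- The sesquilinear form `t[u] = ‖u'‖² - ∫ Q (conj(u')u + conj(u)u') + ∫ τ|u|²`
associated with the Schrödinger operator with potential `q = Q' + τ`. -/
noncomputable def tform (Q τ u u' : ℝ → ℂ) : ℂ :=
  (Complex.ofReal (∫ x : ℝ, ‖u' x‖ ^ 2))
    - (∫ x : ℝ, Q x * ((starRingEnd ℂ) (u' x) * u x + (starRingEnd ℂ) (u x) * u' x))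
    + ∫ x : ℝ, τ x * (‖u x‖ : ℂ) ^ 2

lemma cs_aux {μ : Measure ℝ} (f g : ℝ → ℝ) (hf : MemLp f 2 μ) (hg : MemLp g 2 μ) :
    (∫ x, f x * g x ∂μ) ^ 2 ≤ (∫ x, f x ^ 2 ∂μ) * ∫ x, g x ^ 2 ∂μ := by
  have h1 : Integrable (fun x => f x * g x) μ := hf.integrable_mul hg
  have h2 : Integrable (fun x => f x ^ 2) μ := hf.integrable_sq
  have h3 : Integrable (fun x => g x ^ 2) μ := hg.integrable_sq
  have key : ∀ s : ℝ, 0 ≤ (∫ x, g x ^ 2 ∂μ) * (s * s) + (2 * ∫ x, f x * g x ∂μ) * s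
      + ∫ x, f x ^ 2 ∂μ := by
    intro s
    have : (∫ x, g x ^ 2 ∂μ) * (s * s) + (2 * ∫ x, f x * g x ∂μ) * s + ∫ x, f x ^ 2 ∂μ
        = ∫ x, (f x + s * g x) ^ 2 ∂μ := by
      have e : (fun x => (f x + s * g x) ^ 2)
          = fun x => (s * s) * g x ^ 2 + (2 * s) * (f x * g x) + f x ^ 2 := by
        funext x; ring
      have h4 : Integrable (fun x => (s * s) * g x ^ 2 + (2 * s) * (f x * g x)) μ :=
        (h3.const_mul _).add (h1.const_mul _)
      rw [e, integral_add h4 h2,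
        integral_add (h3.const_mul _) (h1.const_mul _), integral_const_mul, integral_const_mul]
      ring
    rw [this]
    exact integral_nonneg fun x => sq_nonneg _
  have := discrim_le_zero key
  unfold discrim at this
  nlinarith

lemma sup_aux (u u' : ℝ → ℂ) (hu : InH1 u u') (n x δ : ℝ) (hδ : 0 < δ) (hδ1 : δ ≤ 1)
    (hx : x ∈ Set.Ioc n (n + 1)) :
    ‖u x‖ ^ 2 ≤ 2 * δ * (∫ s in Set.Ioc n (n + 1), ‖u' s‖ ^ 2)
      + 2 / δ * ∫ s in Set.Ioc n (n + 1), ‖u s‖ ^ 2 := by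
  obtain ⟨hl, hi, hu2, hv2⟩ := hu
  obtain ⟨c, hc1, hc2, hc3, hc4⟩ : ∃ c, n ≤ c ∧ c + δ ≤ n + 1 ∧ c ≤ x ∧ x ≤ c + δ := by
    by_cases h : x ≤ n + δ
    · exact ⟨n, le_rfl, by linarith, hx.1.le, h⟩
    · exact ⟨x - δ, by linarith, by linarith [hx.2], by linarith, by linarith⟩
  have hsub : Set.Ioc c (c + δ) ⊆ Set.Ioc n (n + 1) := Set.Ioc_subset_Ioc hc1 hc2
  have iu : Integrable (fun s => ‖u s‖ ^ 2) := hu2.norm.integrable_sq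
  have iv : Integrable (fun s => ‖u' s‖ ^ 2) := hv2.norm.integrable_sq
  set A := ∫ s in Set.Ioc n (n + 1), ‖u' s‖ ^ 2 with hA
  set B := ∫ s in Set.Ioc n (n + 1), ‖u s‖ ^ 2 with hB
  have hAJ : ∫ s in Set.Ioc c (c + δ), ‖u' s‖ ^ 2 ≤ A :=
    setIntegral_mono_set iv.integrableOn (Filter.Eventually.of_forall fun s => by positivity)
      hsub.eventuallyLE
  have hBJ : ∫ s in Set.Ioc c (c + δ), ‖u s‖ ^ 2 ≤ B :=
    setIntegral_mono_set iu.integrableOn (Filter.Eventually.of_forall fun s => by positivity)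
      hsub.eventuallyLE
  have hvJ : IntegrableOn u' (Set.Ioc c (c + δ)) :=
    (hl.integrableOn_isCompact isCompact_Icc).mono_set Set.Ioc_subset_Icc_self
  have hcs : (∫ s in Set.Ioc c (c + δ), ‖u' s‖) ^ 2 ≤ δ * A := by
    have := cs_aux (μ := volume.restrict (Set.Ioc c (c + δ))) (fun _ => 1) (fun s => ‖u' s‖)
      (memLp_const _) (hv2.norm.restrict _)
    simp [hδ.le] at this
    nlinarith
  have hii : ∀ a b : ℝ, IntervalIntegrable u' volume a b := fun a b =>
    (hl.integrableOn_isCompact isCompact_uIcc).intervalIntegrable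
  have hpt : ∀ y ∈ Set.Ioc c (c + δ), ‖u x‖ ^ 2 ≤ 2 * ‖u y‖ ^ 2 + 2 * (δ * A) := by
    intro y hy
    have e : u x - u y = ∫ s in y..x, u' s := by
      rw [hi x, hi y, ← intervalIntegral.integral_interval_sub_left
        (hii 0 x) (hii 0 y)]
      ring
    have h1 : ‖u x - u y‖ ≤ ∫ s in Set.Ioc c (c + δ), ‖u' s‖ := by
      rw [e]
      refine intervalIntegral.norm_integral_le_integral_norm_uIoc.trans ?_
      refine setIntegral_mono_set hvJ.norm (Filter.Eventually.of_forall fun s => norm_nonneg _)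
        (LE.le.eventuallyLE ?_)
      intro s hs
      rcases Set.mem_uIoc.1 hs with h | h
      · exact ⟨by linarith [hy.1], by linarith⟩
      · exact ⟨by linarith, by linarith [hy.2]⟩
    have h2 : ‖u x‖ ≤ ‖u y‖ + ‖u x - u y‖ := by
      have := norm_add_le (u y) (u x - u y); simpa using this
    have h3 : ‖u x - u y‖ ^ 2 ≤ δ * A :=
      (pow_le_pow_left₀ (norm_nonneg _) h1 2).trans hcs
    have h4 := pow_le_pow_left₀ (norm_nonneg _) h2 2
    nlinarith [sq_nonneg (‖u y‖ - ‖u x - u y‖)]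
  have hint : ∫ y in Set.Ioc c (c + δ), ‖u x‖ ^ 2
      ≤ ∫ y in Set.Ioc c (c + δ), (2 * ‖u y‖ ^ 2 + 2 * (δ * A)) :=
    setIntegral_mono_on (by simp) ((iu.integrableOn.const_mul _).add (integrable_const _))
      measurableSet_Ioc hpt
  rw [integral_add (iu.integrableOn.const_mul _) (integrable_const _), integral_const_mul] at hint
  simp [hδ.le] at hint
  have : δ * ‖u x‖ ^ 2 ≤ δ * (2 * δ * A + 2 / δ * B) := by
    have : δ * (2 * δ * A + 2 / δ * B) = 2 * B + δ * (2 * (δ * A)) := by field_simp; ring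
    rw [this]; linarith
  exact le_of_mul_le_mul_left this hδ

lemma cells_aux (F : ℝ → ℂ) (G : ℝ → ℝ) (hG : Integrable G) (hG0 : ∀ x, 0 ≤ G x)
    (h : ∀ n : ℝ, ∫ x in Set.Ioc n (n + 1), ‖F x‖ ≤ ∫ x in Set.Ioc n (n + 1), G x) :
    ‖∫ x, F x‖ ≤ ∫ x, G x := by
  by_cases hF : Integrable F
  · refine (norm_integral_le_integral_norm _).trans ?_
    refine hasSum_le (fun n : ℤ => ?_) (hF.norm.hasSum_intervalIntegral 0)
      (hG.hasSum_intervalIntegral 0)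
    rw [intervalIntegral.integral_of_le (by linarith), intervalIntegral.integral_of_le (by linarith)]
    exact h _
  · rw [integral_undef hF, norm_zero]
    exact integral_nonneg hG0

/-- The perturbing form `t_{Q,τ}[u] = -∫ Q(conj(u')u + conj(u)u') + ∫ τ|u|²` satisfies
`|t_{Q,τ}[u]| ≤ Kε‖u'‖² + 4Kε⁻³‖u‖²` for all `ε ∈ (0,1]`, where
`K = 2(‖Q‖_{L²_unif} + ‖τ‖_{L¹_unif})`. -/
theorem perturbation_form_estimate (Q τ u u' : ℝ → ℂ)
    (hQ : InStepL2 Q) (hτ : InStepL1 τ) (hu : InH1 u u')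
    (ε : ℝ) (hε : 0 < ε) (hε1 : ε ≤ 1) :
    norm
        (-(∫ x : ℝ, Q x * ((starRingEnd ℂ) (u' x) * u x + (starRingEnd ℂ) (u x) * u' x))
          + ∫ x : ℝ, τ x * (‖u x‖ : ℂ) ^ 2) ≤
      Kc Q τ * ε * (∫ x : ℝ, ‖u' x‖ ^ 2) + 4 * Kc Q τ * ε⁻¹ ^ 3 * (∫ x : ℝ, ‖u x‖ ^ 2) := by
  have hu2 := hu.2.2.1
  have hv2 := hu.2.2.2
  have iu : Integrable (fun s => ‖u s‖ ^ 2) := hu2.norm.integrable_sq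
  have iv : Integrable (fun s => ‖u' s‖ ^ 2) := hv2.norm.integrable_sq
  obtain ⟨hQm, hQl, hQb⟩ := hQ
  obtain ⟨hτl, hτb⟩ := hτ
  have hT : ∀ n : ℝ, ∫ s in Set.Ioc n (n + 1), ‖τ s‖ ≤ stepL1 τ := by
    intro n
    rw [← intervalIntegral.integral_of_le (by linarith)]
    exact le_ciSup hτb n
  have hq : ∀ n : ℝ, ∫ s in Set.Ioc n (n + 1), ‖Q s‖ ^ 2 ≤ stepL2 Q ^ 2 := by
    intro n
    have h1 := le_ciSup hQb n
    have h0 : 0 ≤ ∫ s in Set.Ioc n (n + 1), ‖Q s‖ ^ 2 :=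
      integral_nonneg fun s => by positivity
    simp only [intervalIntegral.integral_of_le (show n ≤ n + 1 by linarith)] at h1
    unfold stepL2
    rw [Real.sq_sqrt (h0.trans h1)]
    exact h1
  have hT0 : 0 ≤ stepL1 τ := (integral_nonneg fun s => norm_nonneg _).trans (hT 0)
  have hq0 : 0 ≤ stepL2 Q := Real.sqrt_nonneg _
  unfold Kc
  set T := stepL1 τ
  set q := stepL2 Q
  have hi : 1 ≤ ε⁻¹ := (one_le_inv₀ hε).2 hε1
  have hG : ∀ k : ℝ, 0 ≤ k → ∀ F : ℝ → ℂ,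
      (∀ n : ℝ, ∫ x in Set.Ioc n (n + 1), ‖F x‖ ≤
        2 * k * ε * (∫ x in Set.Ioc n (n + 1), ‖u' x‖ ^ 2)
        + 8 * k * ε⁻¹ ^ 3 * ∫ x in Set.Ioc n (n + 1), ‖u x‖ ^ 2) →
      ‖∫ x, F x‖ ≤ 2 * k * ε * (∫ x, ‖u' x‖ ^ 2) + 8 * k * ε⁻¹ ^ 3 * ∫ x, ‖u x‖ ^ 2 := by
    intro k hk F hF
    rw [← integral_const_mul, ← integral_const_mul,
      ← integral_add (iv.const_mul _) (iu.const_mul _)]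
    refine cells_aux F _ ((iv.const_mul _).add (iu.const_mul _)) (fun x => by positivity) ?_
    intro n
    rw [integral_add (iv.const_mul _).integrableOn (iu.const_mul _).integrableOn,
      integral_const_mul, integral_const_mul]
    exact hF n
  have h1 := hG q hq0
    (fun x => Q x * ((starRingEnd ℂ) (u' x) * u x + (starRingEnd ℂ) (u x) * u' x)) (by
    intro n
    have hs := fun x hx => sup_aux u u' hu n x (ε ^ 2 / 2) (by positivity) (by nlinarith) hx
    set A := ∫ x in Set.Ioc n (n + 1), ‖u' x‖ ^ 2
    set B := ∫ x in Set.Ioc n (n + 1), ‖u x‖ ^ 2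
    have hA0 : 0 ≤ A := integral_nonneg fun s => by positivity
    have hB0 : 0 ≤ B := integral_nonneg fun s => by positivity
    set M := 2 * (ε ^ 2 / 2) * A + 2 / (ε ^ 2 / 2) * B with hM
    have hM0 : 0 ≤ M := by positivity
    have hQL : MemLp (fun x => ‖Q x‖) 2 (volume.restrict (Set.Ioc n (n + 1))) := by
      refine MemLp.norm ((memLp_two_iff_integrable_sq_norm hQm.restrict).2 ?_)
      exact (hQl.integrableOn_isCompact isCompact_Icc).mono_set Set.Ioc_subset_Icc_self
    have hvL : MemLp (fun x => ‖u' x‖) 2 (volume.restrict (Set.Ioc n (n + 1))) :=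
      hv2.norm.restrict _
    have hcs := cs_aux _ _ hQL hvL
    set I := ∫ x in Set.Ioc n (n + 1), ‖Q x‖ * ‖u' x‖
    have hI : I ^ 2 ≤ q ^ 2 * A := hcs.trans (mul_le_mul_of_nonneg_right (hq n) hA0)
    have hstep : ∫ x in Set.Ioc n (n + 1),
        ‖Q x * ((starRingEnd ℂ) (u' x) * u x + (starRingEnd ℂ) (u x) * u' x)‖
        ≤ ∫ x in Set.Ioc n (n + 1), 2 * √M * (‖Q x‖ * ‖u' x‖) := by
      refine integral_mono_of_nonneg (Filter.Eventually.of_forall fun x => norm_nonneg _)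
        ((hQL.integrable_mul hvL).const_mul _) ?_
      filter_upwards [ae_restrict_mem measurableSet_Ioc] with x hx
      have hux : ‖u x‖ ≤ √M := Real.le_sqrt_of_sq_le (hs x hx)
      have hn : ‖(starRingEnd ℂ) (u' x) * u x + (starRingEnd ℂ) (u x) * u' x‖
          ≤ 2 * √M * ‖u' x‖ := by
        refine (norm_add_le _ _).trans ?_
        simp only [norm_mul, RCLike.norm_conj]
        nlinarith [mul_le_mul_of_nonneg_right hux (norm_nonneg (u' x))]
      rw [norm_mul]
      calc _ ≤ ‖Q x‖ * (2 * √M * ‖u' x‖) := mul_le_mul_of_nonneg_left hn (norm_nonneg _)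
        _ = _ := by ring
    rw [integral_const_mul] at hstep
    refine hstep.trans ?_
    have hI' : I ≤ q * √A := by
      refine abs_le_of_sq_le_sq' ?_ (by positivity) |>.2
      rw [mul_pow, Real.sq_sqrt hA0]; exact hI
    have h5 : 2 * √M * √A ≤ ε * A + ε⁻¹ * M := by
      have := sq_nonneg (ε * √A - √M)
      have e : ε * (ε * A + ε⁻¹ * M) = ε ^ 2 * A + M := by field_simp
      refine le_of_mul_le_mul_left ?_ hε
      rw [e]
      nlinarith [Real.sq_sqrt hA0, Real.sq_sqrt hM0]
    calc 2 * √M * I ≤ 2 * √M * (q * √A) := mul_le_mul_of_nonneg_left hI' (by positivity)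
      _ = q * (2 * √M * √A) := by ring
      _ ≤ q * (ε * A + ε⁻¹ * M) := mul_le_mul_of_nonneg_left h5 hq0
      _ = 2 * q * ε * A + 4 * q * ε⁻¹ ^ 3 * B := by rw [hM]; field_simp; ring
      _ ≤ _ := by
        have : 0 ≤ q * ε⁻¹ ^ 3 * B := by positivity
        linarith)
  have h2 := hG T hT0 (fun x => τ x * (‖u x‖ : ℂ) ^ 2) (by
    intro n
    have hs := fun x hx => sup_aux u u' hu n x ε hε hε1 hx
    set A := ∫ x in Set.Ioc n (n + 1), ‖u' x‖ ^ 2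
    set B := ∫ x in Set.Ioc n (n + 1), ‖u x‖ ^ 2
    have hA0 : 0 ≤ A := integral_nonneg fun s => by positivity
    have hB0 : 0 ≤ B := integral_nonneg fun s => by positivity
    set M := 2 * ε * A + 2 / ε * B with hM
    have hM0 : 0 ≤ M := by positivity
    have hstep : ∫ x in Set.Ioc n (n + 1), ‖τ x * (‖u x‖ : ℂ) ^ 2‖
        ≤ ∫ x in Set.Ioc n (n + 1), M * ‖τ x‖ := by
      refine integral_mono_of_nonneg (Filter.Eventually.of_forall fun x => norm_nonneg _)
        (Integrable.const_mul ?_ _) ?_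
      · exact ((hτl.integrableOn_isCompact isCompact_Icc).mono_set Set.Ioc_subset_Icc_self).norm
      filter_upwards [ae_restrict_mem measurableSet_Ioc] with x hx
      simp only [norm_mul, norm_pow, Complex.norm_real, norm_norm]
      rw [mul_comm]
      exact mul_le_mul_of_nonneg_right (hs x hx) (norm_nonneg _)
    rw [integral_const_mul] at hstep
    refine hstep.trans ?_
    calc M * _ ≤ M * T := mul_le_mul_of_nonneg_left (hT n) hM0
      _ = 2 * T * ε * A + 2 * T * ε⁻¹ * B := by rw [hM]; ring
      _ ≤ _ := by
        have h6 : ε⁻¹ ≤ ε⁻¹ ^ 3 := le_self_pow₀ hi (by norm_num)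
        have h7 := mul_le_mul_of_nonneg_left h6 (mul_nonneg hT0 hB0)
        have h8 : 0 ≤ T * ε⁻¹ ^ 3 * B := by positivity
        nlinarith)
  refine (norm_add_le _ _).trans ?_
  rw [norm_neg]
  refine (add_le_add h1 h2).trans (le_of_eq ?_)
  ring
end

section
/- Let a, b, s > 0, let m ≥ 0 and α₀ ≥ 0 be real numbers, and let β ∈ ℂ. Suppose ε satisfies 0 < ε ≤ (2a+1)^{−1} and |β| ≤ a ε α₀ + b ε^{−s} m. Then, setting α := α₀ + β, one has |Im α| ≤ 2 a ε Re α + 2 b ε^{−s} m. -/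
/-- Pointwise form-perturbation lemma: if `|β| ≤ aεα₀ + bε⁻ˢm` with
`0 < ε ≤ (2a+1)⁻¹`, then `α = α₀ + β` satisfies `|Im α| ≤ 2aε Re α + 2bε⁻ˢm`. -/
theorem im_le_of_perturbation (a b s m α₀ ε : ℝ) (β : ℂ)
    (ha : 0 < a) (hb : 0 < b) (hs : 0 < s) (hm : 0 ≤ m) (hα₀ : 0 ≤ α₀)
    (hε : 0 < ε) (hε' : ε ≤ (2 * a + 1)⁻¹)
    (hβ : ‖β‖ ≤ a * ε * α₀ + b * ε ^ (-s) * m) :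
    |((α₀ : ℂ) + β).im| ≤ 2 * a * ε * ((α₀ : ℂ) + β).re + 2 * b * ε ^ (-s) * m := by
  have hX : 0 ≤ b * ε ^ (-s) * m := by positivity
  have ht : 0 < a * ε := by positivity
  have h1 : ε * (2 * a + 1) ≤ 1 := by
    have h := mul_le_mul_of_nonneg_right hε' (by positivity : (0 : ℝ) ≤ 2 * a + 1)
    rwa [inv_mul_cancel₀ (by positivity)] at h
  have h2 : 2 * (a * ε) ≤ 1 := by linarith
  have hre := Complex.abs_re_le_norm β
  have him := Complex.abs_im_le_norm β
  have h3 : -‖β‖ ≤ 2 * (a * ε) * β.re := by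
    have h4 := neg_le_of_abs_le hre
    have h5 := norm_nonneg β
    nlinarith
  simp only [Complex.add_im, Complex.add_re, Complex.ofReal_im, Complex.ofReal_re, zero_add]
  linarith
end

section
/- Let a, b, s > 0, let α₀ : D → ℝ_{≥0} and β : D → ℂ be functions on a set D, and suppose that for every u ∈ D and every ε ∈ (0, (2a+1)^{−1}] one has |β(u)| ≤ aε α₀(u) + bε^{−s}. Set α(u) := α₀(u) + β(u). Then for every u ∈ D the complex number α(u) belongs to the set M_{a,b,s} := { λ ∈ ℂ : λ₀ ≤ Re λ ≤ λ₁ and |Im λ| ≤ (2a/(2a+1)) Re λ + 2b(2a+1)^s } ∪ { λ ∈ ℂ : Re λ > λ₁ and |Im λ| ≤ 2(s+1) b^{1/(s+1)} (a/s)^{s/(s+1)} (Re λ)^{s/(s+1)} }, where λ₀ := −(b/a)(2a+1)^{s+1} and λ₁ := (bs/a)(2a+1)^{s+1}. -/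
/-- Numerical-range localization: if a positive form `α₀` and a perturbation `β` satisfy the
relative bound `|β(u)| ≤ aε α₀(u) + bε⁻ˢ` for all `u` and all `0 < ε ≤ (2a+1)⁻¹`, then every
value `α(u) = α₀(u) + β(u)` lies in the set `M_{a,b,s}`. -/
theorem numerical_range_in_M {D : Type*} (a b s : ℝ) (ha : 0 < a) (hb : 0 < b) (hs : 0 < s)
    (α₀ : D → ℝ) (hα₀ : ∀ u, 0 ≤ α₀ u) (β : D → ℂ)
    (hβ : ∀ u, ∀ ε : ℝ, 0 < ε → ε ≤ (2 * a + 1)⁻¹ →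
      ‖β u‖ ≤ a * ε * α₀ u + b * ε ^ (-s)) (u : D) :
    ((α₀ u : ℂ) + β u) ∈
      ({z : ℂ | (-(b / a) * (2 * a + 1) ^ (s + 1) ≤ z.re ∧
            z.re ≤ b * s / a * (2 * a + 1) ^ (s + 1)) ∧
          |z.im| ≤ 2 * a / (2 * a + 1) * z.re + 2 * b * (2 * a + 1) ^ s} ∪
       {z : ℂ | b * s / a * (2 * a + 1) ^ (s + 1) < z.re ∧
          |z.im| ≤ 2 * (s + 1) * b ^ (1 / (s + 1)) * (a / s) ^ (s / (s + 1)) *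
            z.re ^ (s / (s + 1))}) := by
  have hc : 0 < 2 * a + 1 := by linarith
  obtain ⟨R, hR⟩ : ∃ R, R = ((α₀ u : ℂ) + β u).re := ⟨_, rfl⟩
  have hR2 : R = α₀ u + (β u).re := by simp [hR]
  have him : ((α₀ u : ℂ) + β u).im = (β u).im := by simp
  have key : ∀ ε : ℝ, 0 < ε → ε ≤ (2 * a + 1)⁻¹ →
      |(β u).im| ≤ 2 * (a * ε * R + b * ε ^ (-s)) := by
    intro ε h0 h1
    have h := hβ u ε h0 h1
    have hi := Complex.abs_im_le_norm (β u)
    have hr := (abs_le.1 (Complex.abs_re_le_norm (β u))).1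
    have hn := norm_nonneg (β u)
    have hk0 : 0 < a * ε := mul_pos ha h0
    have hk : a * ε ≤ 1 / 2 := by
      have : ε * (2 * a + 1) ≤ 1 := by
        calc ε * (2 * a + 1) ≤ (2 * a + 1)⁻¹ * (2 * a + 1) := by gcongr
          _ = 1 := inv_mul_cancel₀ hc.ne'
      nlinarith
    have hx : α₀ u ≤ R + ‖β u‖ := by linarith
    have h2 := mul_le_mul_of_nonneg_left hx hk0.le
    have h3 := mul_le_mul_of_nonneg_right hk hn
    linarith
  simp only [Set.mem_union, Set.mem_setOf_eq, him, ← hR]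
  rcases le_or_gt R (b * s / a * (2 * a + 1) ^ (s + 1)) with hle | hgt
  · left
    have h := key (2 * a + 1)⁻¹ (inv_pos.2 hc) le_rfl
    rw [Real.inv_rpow hc.le, Real.rpow_neg hc.le, inv_inv] at h
    have h' : |(β u).im| ≤ 2 * a / (2 * a + 1) * R + 2 * b * (2 * a + 1) ^ s := by
      refine h.trans (le_of_eq ?_)
      field_simp
    refine ⟨⟨?_, hle⟩, h'⟩
    have h0 := (abs_nonneg _).trans h'
    rw [Real.rpow_add hc, Real.rpow_one]
    have e : 2 * a / (2 * a + 1) * R + 2 * b * (2 * a + 1) ^ s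
        = 2 * a / (2 * a + 1) * (R - -(b / a) * ((2 * a + 1) ^ s * (2 * a + 1))) := by
      field_simp
      ring
    rw [e] at h0
    have := nonneg_of_mul_nonneg_right h0 (by positivity)
    linarith
  · right
    refine ⟨hgt, ?_⟩
    have hs1 : 0 < s + 1 := by linarith
    have hRpos : 0 < R := lt_trans (by positivity) hgt
    obtain ⟨y, hy⟩ : ∃ y, y = (a / s) * R / b := ⟨_, rfl⟩
    have hypos : 0 < y := by rw [hy]; positivity
    have hyge : (2 * a + 1) ^ (s + 1) ≤ y := by
      rw [hy, le_div_iff₀ hb]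
      have := mul_le_mul_of_nonneg_left hgt.le (show 0 ≤ a / s by positivity)
      refine le_trans (le_of_eq ?_) this
      field_simp
    have hε : y ^ (-(1 / (s + 1))) ≤ (2 * a + 1)⁻¹ := by
      rw [Real.rpow_neg hypos.le]
      apply inv_anti₀ hc
      have := Real.rpow_le_rpow (by positivity) hyge (show 0 ≤ 1 / (s + 1) by positivity)
      rwa [← Real.rpow_mul hc.le, mul_one_div_cancel hs1.ne', Real.rpow_one] at this
    have h := key _ (Real.rpow_pos_of_pos hypos _) hε
    refine h.trans (le_of_eq ?_)
    have e1 : (y ^ (-(1 / (s + 1)))) ^ (-s) = y ^ (s / (s + 1)) := by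
      rw [← Real.rpow_mul hypos.le]
      congr 1
      field_simp
    have e2 : y ^ (-(1 / (s + 1))) * y = y ^ (s / (s + 1)) := by
      rw [← Real.rpow_add_one hypos.ne']
      congr 1
      field_simp
      ring
    have e3 : a * R = b * s * y := by
      rw [hy]
      field_simp
    have e4 : b * y ^ (s / (s + 1))
        = b ^ (1 / (s + 1)) * (a / s) ^ (s / (s + 1)) * R ^ (s / (s + 1)) := by
      have hbb : b = b ^ (1 / (s + 1)) * b ^ (s / (s + 1)) := by
        rw [← Real.rpow_add hb, ← add_div, add_comm, div_self hs1.ne', Real.rpow_one]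
      have hbp := Real.rpow_pos_of_pos hb (s / (s + 1))
      rw [hy, Real.div_rpow (by positivity) hb.le, Real.mul_rpow (by positivity) hRpos.le,
        mul_div_assoc', div_eq_iff hbp.ne']
      nth_rewrite 1 [hbb]
      ring
    rw [e1]
    calc _ = 2 * (a * R * y ^ (-(1 / (s + 1))) + b * y ^ (s / (s + 1))) := by ring
      _ = 2 * (b * s * (y ^ (-(1 / (s + 1))) * y) + b * y ^ (s / (s + 1))) := by rw [e3]; ring
      _ = 2 * (s + 1) * (b * y ^ (s / (s + 1))) := by rw [e2]; ring
      _ = _ := by rw [e4]; ring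
end

section
/- Let Q ∈ L²_unif(ℝ), τ ∈ L¹_unif(ℝ), K := 2(‖Q‖_{L²_unif(ℝ)} + ‖τ‖_{L¹_unif(ℝ)}), and for u ∈ H¹(ℝ) define t[u] := ∫_ℝ |u'(x)|² dx − ∫_ℝ Q(x)( conj(u'(x)) u(x) + conj(u(x)) u'(x) ) dx + ∫_ℝ τ(x) |u(x)|² dx. Then for every u ∈ H¹(ℝ) and every ε with 0 < ε ≤ (2K+1)^{−1}: |Im t[u]| ≤ 2Kε Re t[u] + 8Kε^{−3} ‖u‖²_{L²(ℝ)}. -/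
open MeasureTheory

lemma aux_interval (u u' : ℝ → ℂ) (hu : InH1 u u') (a δ x : ℝ) (hδ : 0 < δ)
    (hx : x ∈ Set.Icc a (a + δ)) :
    ‖u x‖ ^ 2 ≤ ∫ y in Set.Ioc a (a + δ), (2 * δ * ‖u' y‖ ^ 2 + 2 / δ * ‖u y‖ ^ 2) := by
  obtain ⟨hloc, hac, hu2, hu'2⟩ := hu
  have i1 : Integrable (fun y => ‖u y‖ ^ 2) := hu2.integrable_norm_pow (by norm_num)
  have i2 : Integrable (fun y => ‖u' y‖ ^ 2) := hu'2.integrable_norm_pow (by norm_num)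
  have hii : ∀ s t : ℝ, IntervalIntegrable u' volume s t := fun s t =>
    (hloc.integrableOn_isCompact isCompact_uIcc).intervalIntegrable
  set J := Set.Ioc a (a + δ) with hJ
  have i3 : IntegrableOn (fun y => ‖u' y‖) J := by
    have := (hii a (a + δ)).norm
    rwa [intervalIntegrable_iff_integrableOn_Ioc_of_le (by linarith)] at this
  set A := ∫ y in J, ‖u' y‖ with hA
  set D := ∫ y in J, ‖u' y‖ ^ 2 with hD
  set N := ∫ y in J, ‖u y‖ ^ 2 with hN
  have hvol : volume.real J = δ := by
    rw [hJ, Real.volume_real_Ioc_of_le (by linarith)]; ring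
  have : IsFiniteMeasure (volume.restrict J) := ⟨by simp [hJ]⟩
  have hA0 : 0 ≤ A := integral_nonneg fun _ => norm_nonneg _
  -- Cauchy-Schwarz
  have hCS : A ^ 2 ≤ δ * D := by
    have h0 : 0 ≤ ∫ y in J, (‖u' y‖ ^ 2 - 2 * (A / δ) * ‖u' y‖ + (A / δ) ^ 2) := by
      apply integral_nonneg
      intro y
      have := sq_nonneg (‖u' y‖ - A / δ)
      simp only [Pi.zero_apply]
      nlinarith
    rw [integral_add (by exact (i2.integrableOn.sub (i3.const_mul _))) (integrable_const _),
      integral_sub i2.integrableOn (i3.const_mul _), integral_const_mul,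
      setIntegral_const, hvol, smul_eq_mul] at h0
    have h1 : D - 2 * (A / δ) * A + δ * (A / δ) ^ 2 = D - A ^ 2 / δ := by
      field_simp; ring
    rw [← hD, ← hA, h1] at h0
    have : A ^ 2 / δ ≤ D := by linarith
    rw [div_le_iff₀ hδ] at this
    linarith
  have hpt : ∀ y ∈ J, ‖u x‖ ^ 2 ≤ 2 * ‖u y‖ ^ 2 + 2 * (δ * D) := by
    intro y hy
    have h1 : u x - u y = ∫ s in y..x, u' s := by
      rw [hac x, hac y, ← intervalIntegral.integral_interval_sub_left (hii 0 x) (hii 0 y)]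
      ring
    have h2 : ‖u x - u y‖ ≤ A := by
      rw [h1]
      refine (intervalIntegral.norm_integral_le_integral_norm_uIoc).trans ?_
      apply setIntegral_mono_set i3 (Filter.Eventually.of_forall fun _ => norm_nonneg _)
      apply LE.le.eventuallyLE
      intro z hz
      rw [Set.mem_uIoc] at hz
      rcases hz with hz | hz
      · exact ⟨hy.1.trans hz.1, hz.2.trans hx.2⟩
      · exact ⟨lt_of_le_of_lt hx.1 hz.1, hz.2.trans hy.2⟩
    have h3 : ‖u x‖ ≤ ‖u y‖ + A := by
      have := norm_add_le (u y) (u x - u y)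
      rw [add_sub_cancel] at this
      linarith
    have h4 : ‖u x‖ ^ 2 ≤ (‖u y‖ + A) ^ 2 := by
      gcongr
    nlinarith [sq_nonneg (‖u y‖ - A)]
  have hint : ∫ y in J, ‖u x‖ ^ 2 ≤ ∫ y in J, (2 * ‖u y‖ ^ 2 + 2 * (δ * D)) := by
    apply setIntegral_mono_on (integrable_const _)
      (by exact ((i1.integrableOn.const_mul 2).add (integrable_const _))) measurableSet_Ioc hpt
  rw [integral_add (i1.integrableOn.const_mul 2) (integrable_const _), integral_const_mul,
    setIntegral_const, setIntegral_const, hvol, smul_eq_mul, smul_eq_mul, ← hN] at hint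
  rw [integral_add (i2.integrableOn.const_mul _) (i1.integrableOn.const_mul _),
    integral_const_mul, integral_const_mul, ← hD, ← hN]
  have : δ * (2 * δ * D + 2 / δ * N) = 2 * N + δ * (2 * (δ * D)) := by field_simp; ring
  refine le_of_mul_le_mul_left ?_ hδ
  linarith

lemma aux_weight (u u' : ℝ → ℂ) (hu : InH1 u u') (w : ℝ → ℝ) (hw0 : ∀ x, 0 ≤ w x)
    (hw : LocallyIntegrable w) (M : ℝ) (hM : ∀ t : ℝ, ∫ s in t..(t + 1), w s ≤ M)
    (η : ℝ) (hη : 0 < η) (hη1 : η ≤ 1) :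
    Integrable (fun x => w x * ‖u x‖ ^ 2) ∧
    ∫ x, w x * ‖u x‖ ^ 2 ≤ M * (η * (∫ x, ‖u' x‖ ^ 2) + 4 / η * ∫ x, ‖u x‖ ^ 2) := by
  have hu0 := hu
  obtain ⟨hloc, hac, hu2, hu'2⟩ := hu
  have i1 : Integrable (fun y => ‖u y‖ ^ 2) := hu2.integrable_norm_pow (by norm_num)
  have i2 : Integrable (fun y => ‖u' y‖ ^ 2) := hu'2.integrable_norm_pow (by norm_num)
  set g : ℝ → ℝ := fun y => η * ‖u' y‖ ^ 2 + 4 / η * ‖u y‖ ^ 2 with hg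
  have ig : Integrable g := (i2.const_mul _).add (i1.const_mul _)
  have g0 : ∀ y, 0 ≤ g y := fun y => by simp only [hg]; positivity
  have hgi : ∫ y, g y = η * (∫ x, ‖u' x‖ ^ 2) + 4 / η * ∫ x, ‖u x‖ ^ 2 := by
    simp only [hg]
    rw [integral_add (i2.const_mul _) (i1.const_mul _), integral_const_mul, integral_const_mul]
  have hM0 : 0 ≤ M := by
    refine le_trans ?_ (hM 0)
    apply intervalIntegral.integral_nonneg (by norm_num)
    intro x _; exact hw0 x
  have hpt : ∀ n : ℤ, ∀ x ∈ Set.Ioc (n : ℝ) (n + 1),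
      ‖u x‖ ^ 2 ≤ ∫ y in Set.Ioc (n : ℝ) (n + 1), g y := by
    intro n x hx
    obtain ⟨a, ha1, ha2, ha3, ha4⟩ : ∃ a : ℝ, n ≤ a ∧ a ≤ x ∧ x ≤ a + η / 2 ∧
        a + η / 2 ≤ n + 1 := by
      rcases le_total x (n + 1 / 2) with h | h
      · exact ⟨x, hx.1.le, le_rfl, by linarith, by linarith⟩
      · exact ⟨x - η / 2, by linarith, by linarith, by linarith, by linarith [hx.2]⟩
    have := aux_interval u u' hu0 a (η / 2) x (by linarith) ⟨ha2, ha3⟩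
    refine this.trans ?_
    have e : (fun y => 2 * (η / 2) * ‖u' y‖ ^ 2 + 2 / (η / 2) * ‖u y‖ ^ 2) = g := by
      funext y
      simp only [hg]
      field_simp
      ring
    rw [e]
    apply setIntegral_mono_set ig.integrableOn (Filter.Eventually.of_forall g0)
    apply LE.le.eventuallyLE
    exact Set.Ioc_subset_Ioc ha1 ha4
  have hU : (⋃ n : ℤ, Set.Ioc (n : ℝ) (n + 1)) = Set.univ := iUnion_Ioc_intCast ℝ
  have hd : Pairwise (Function.onFun Disjoint fun n : ℤ => Set.Ioc (n : ℝ) (n + 1)) :=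
    Set.pairwise_disjoint_Ioc_intCast ℝ
  have key : ∫⁻ x, ENNReal.ofReal (w x * ‖u x‖ ^ 2) ≤ ENNReal.ofReal (M * ∫ y, g y) := by
    rw [← setLIntegral_univ, ← hU, lintegral_iUnion (fun n => measurableSet_Ioc) hd]
    have step : ∀ n : ℤ, ∫⁻ x in Set.Ioc (n : ℝ) (n + 1), ENNReal.ofReal (w x * ‖u x‖ ^ 2) ≤
        ENNReal.ofReal M * ∫⁻ x in Set.Ioc (n : ℝ) (n + 1), ENNReal.ofReal (g x) := by
      intro n
      set I := Set.Ioc (n : ℝ) (n + 1)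
      have iw : IntegrableOn w I := by
        have : IntervalIntegrable w volume (n : ℝ) (n + 1) := (hw.integrableOn_isCompact isCompact_uIcc).intervalIntegrable
        rwa [intervalIntegrable_iff_integrableOn_Ioc_of_le (by linarith)] at this
      rw [← ofReal_integral_eq_lintegral_ofReal ig.integrableOn (Filter.Eventually.of_forall g0),
        ← ENNReal.ofReal_mul hM0]
      calc _ ≤ ∫⁻ x in I, ENNReal.ofReal (w x * ∫ y in I, g y) := by
            apply setLIntegral_mono' measurableSet_Ioc
            intro x hx
            exact ENNReal.ofReal_le_ofReal (mul_le_mul_of_nonneg_left (hpt n x hx) (hw0 x))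
        _ = ENNReal.ofReal (∫ x in I, w x * ∫ y in I, g y) := by
            rw [ofReal_integral_eq_lintegral_ofReal (iw.mul_const _)]
            exact Filter.Eventually.of_forall fun x =>
              mul_nonneg (hw0 x) (integral_nonneg g0)
        _ ≤ _ := by
            apply ENNReal.ofReal_le_ofReal
            rw [integral_mul_const]
            apply mul_le_mul_of_nonneg_right _ (integral_nonneg g0)
            have := hM n
            rwa [intervalIntegral.integral_of_le (by linarith)] at this
    refine (ENNReal.tsum_le_tsum step).trans ?_
    rw [ENNReal.tsum_mul_left, ← lintegral_iUnion (fun n => measurableSet_Ioc) hd, hU,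
      setLIntegral_univ, ← ofReal_integral_eq_lintegral_ofReal ig (Filter.Eventually.of_forall g0),
      ← ENNReal.ofReal_mul hM0]
  have hp0 : ∀ x, 0 ≤ w x * ‖u x‖ ^ 2 := fun x => mul_nonneg (hw0 x) (by positivity)
  have hmeas : AEStronglyMeasurable (fun x => w x * ‖u x‖ ^ 2) volume :=
    hw.aestronglyMeasurable.mul i1.aestronglyMeasurable
  have hint : Integrable (fun x => w x * ‖u x‖ ^ 2) := by
    refine ⟨hmeas, ?_⟩
    rw [hasFiniteIntegral_iff_ofReal (Filter.Eventually.of_forall hp0)]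
    exact key.trans_lt ENNReal.ofReal_lt_top
  refine ⟨hint, ?_⟩
  rw [← hgi]
  rw [← ofReal_integral_eq_lintegral_ofReal hint (Filter.Eventually.of_forall hp0)] at key
  exact (ENNReal.ofReal_le_ofReal_iff (mul_nonneg hM0 (integral_nonneg g0))).1 key

/-- Sectoriality estimate for the form `t`: for `0 < ε ≤ (2K+1)⁻¹`,
`|Im t[u]| ≤ 2Kε Re t[u] + 8Kε⁻³‖u‖²`. -/
theorem im_tform_estimate (Q τ u u' : ℝ → ℂ)
    (hQ : InStepL2 Q) (hτ : InStepL1 τ) (hu : InH1 u u')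
    (ε : ℝ) (hε : 0 < ε) (hε1 : ε ≤ (2 * Kc Q τ + 1)⁻¹) :
    |(tform Q τ u u').im| ≤
      2 * Kc Q τ * ε * (tform Q τ u u').re
        + 8 * Kc Q τ * ε⁻¹ ^ 3 * (∫ x : ℝ, ‖u x‖ ^ 2) := by
  have hu0 := hu
  obtain ⟨hloc, hac, hu2, hu'2⟩ := hu
  have i2 : Integrable (fun y => ‖u' y‖ ^ 2) := hu'2.integrable_norm_pow (by norm_num)
  have hS0 : 0 ≤ ⨆ t : ℝ, ∫ s in t..(t + 1), ‖Q s‖ ^ 2 :=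
    Real.iSup_nonneg fun t => intervalIntegral.integral_nonneg (by linarith)
      fun x _ => by positivity
  have hs0 : 0 ≤ stepL1 τ :=
    Real.iSup_nonneg fun t => intervalIntegral.integral_nonneg (by linarith)
      fun x _ => by positivity
  have hq0 : 0 ≤ stepL2 Q := Real.sqrt_nonneg _
  have hq2 : stepL2 Q ^ 2 = ⨆ t : ℝ, ∫ s in t..(t + 1), ‖Q s‖ ^ 2 := Real.sq_sqrt hS0
  have hK : Kc Q τ = 2 * (stepL2 Q + stepL1 τ) := rfl
  have hK0 : 0 ≤ Kc Q τ := by rw [hK]; positivity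
  have hKε : ε * (2 * Kc Q τ + 1) ≤ 1 := by
    rw [← le_div_iff₀ (by positivity), one_div]; exact hε1
  have hε2 : ε ≤ 1 := by nlinarith [mul_nonneg hε.le hK0]
  have hη1 : ε ^ 2 ≤ 1 := by nlinarith
  set D := ∫ x, ‖u' x‖ ^ 2 with hD
  set N := ∫ x, ‖u x‖ ^ 2 with hN
  have D0 : 0 ≤ D := integral_nonneg fun _ => by positivity
  have N0 : 0 ≤ N := integral_nonneg fun _ => by positivity
  obtain ⟨iQ, bQ⟩ := aux_weight u u' hu0 (fun x => ‖Q x‖ ^ 2) (fun x => by positivity) hQ.2.1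
    (stepL2 Q ^ 2) (fun t => by rw [hq2]; exact le_ciSup hQ.2.2 t) (ε ^ 2) (by positivity) hη1
  obtain ⟨iT, bT⟩ := aux_weight u u' hu0 (fun x => ‖τ x‖) (fun x => by positivity) (fun x => (hτ.1 x).norm)
    (stepL1 τ) (fun t => le_ciSup hτ.2 t) (ε ^ 2) (by positivity) hη1
  set s := stepL1 τ
  set q := stepL2 Q
  rw [← hD, ← hN] at bQ bT
  set A := ∫ x : ℝ, Q x * ((starRingEnd ℂ) (u' x) * u x + (starRingEnd ℂ) (u x) * u' x) with hA
  set B := ∫ x : ℝ, τ x * (‖u x‖ : ℂ) ^ 2 with hB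
  set E := ε⁻¹ with hE
  have hE1 : 1 ≤ E := (one_le_inv₀ hε).2 hε2
  have hεE : ε * E = 1 := mul_inv_cancel₀ hε.ne'
  have h4 : 4 / ε ^ 2 = 4 * E ^ 2 := by rw [hE]; field_simp
  rw [h4] at bQ bT
  have nB : ‖B‖ ≤ s * (2 * ε * D + 4 * E ^ 3 * N) := by
    have h1 : ‖B‖ ≤ ∫ x, ‖τ x‖ * ‖u x‖ ^ 2 := by
      refine norm_integral_le_of_norm_le iT (Filter.Eventually.of_forall fun x => ?_)
      simp
    refine (h1.trans bT).trans (mul_le_mul_of_nonneg_left ?_ hs0)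
    have : ε ^ 2 ≤ 2 * ε := by nlinarith
    have : E ^ 2 ≤ E ^ 3 := pow_le_pow_right₀ hE1 (by norm_num)
    gcongr
  have nA' : ∀ p, q < p → ‖A‖ ≤ p * (2 * ε * D + 4 * E ^ 3 * N) := by
    intro p hp
    have p0 : 0 < p := hq0.trans_lt hp
    have h1 : ‖A‖ ≤ ∫ x, (p * ε * ‖u' x‖ ^ 2 + (p * ε)⁻¹ * (‖Q x‖ ^ 2 * ‖u x‖ ^ 2)) := by
      refine norm_integral_le_of_norm_le ((i2.const_mul _).add (iQ.const_mul _))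
        (Filter.Eventually.of_forall fun x => ?_)
      have hb : ‖(starRingEnd ℂ) (u' x) * u x + (starRingEnd ℂ) (u x) * u' x‖
          ≤ 2 * (‖u x‖ * ‖u' x‖) := by
        refine (norm_add_le _ _).trans (le_of_eq ?_)
        simp only [norm_mul, RCLike.norm_conj]; ring
      rw [norm_mul]
      refine (mul_le_mul_of_nonneg_left hb (norm_nonneg _)).trans ?_
      have hc : 0 < p * ε := by positivity
      have hs := mul_nonneg (inv_nonneg.2 hc.le) (sq_nonneg (p * ε * ‖u' x‖ - ‖Q x‖ * ‖u x‖))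
      have he : (p * ε)⁻¹ * (p * ε * ‖u' x‖ - ‖Q x‖ * ‖u x‖) ^ 2 =
        p * ε * ‖u' x‖ ^ 2 + (p * ε)⁻¹ * (‖Q x‖ ^ 2 * ‖u x‖ ^ 2)
          - ‖Q x‖ * (2 * (‖u x‖ * ‖u' x‖)) := by
        field_simp; ring
      linarith
    rw [integral_add (i2.const_mul _) (iQ.const_mul _), integral_const_mul, integral_const_mul,
      ← hD] at h1
    have h2 : (p * ε)⁻¹ * ∫ x, ‖Q x‖ ^ 2 * ‖u x‖ ^ 2 ≤
        (p * ε)⁻¹ * (p ^ 2 * (ε ^ 2 * D + 4 * E ^ 2 * N)) := by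
      apply mul_le_mul_of_nonneg_left _ (by positivity)
      refine bQ.trans ?_
      gcongr
    have h3 : (p * ε)⁻¹ * (p ^ 2 * (ε ^ 2 * D + 4 * E ^ 2 * N)) =
        p * (ε * D + 4 * E ^ 3 * N) := by
      rw [hE]; field_simp
    rw [h3] at h2
    nlinarith
  have nA : ‖A‖ ≤ q * (2 * ε * D + 4 * E ^ 3 * N) := by
    have hc : Filter.Tendsto (fun p : ℝ => p * (2 * ε * D + 4 * E ^ 3 * N))
        (nhdsWithin q (Set.Ioi q)) (nhds (q * (2 * ε * D + 4 * E ^ 3 * N))) :=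
      (Continuous.tendsto (by fun_prop) q).mono_left nhdsWithin_le_nhds
    refine ge_of_tendsto hc ?_
    filter_upwards [self_mem_nhdsWithin] with p hp using nA' p hp
  have him : (tform Q τ u u').im = (B - A).im := by
    simp only [tform, ← hA, ← hB, ← hD, Complex.add_im, Complex.sub_im, Complex.ofReal_im]; ring
  have hre : (tform Q τ u u').re = D + (B - A).re := by
    simp only [tform, ← hA, ← hB, ← hD, Complex.add_re, Complex.sub_re, Complex.ofReal_re]; ring
  have nBA : ‖B - A‖ ≤ Kc Q τ * (ε * D + 2 * E ^ 3 * N) := by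
    have := norm_sub_le B A
    rw [hK]
    nlinarith
  rw [him, hre]
  set k := Kc Q τ
  have r1 := Complex.abs_im_le_norm (B - A)
  have r2 := (abs_le.1 (Complex.abs_re_le_norm (B - A))).1
  have hkε : 0 ≤ 2 * k * ε := by positivity
  have hkε1 : 2 * k * ε ≤ 1 := by nlinarith
  have r3 : 2 * k * ε * (-‖B - A‖) ≤ 2 * k * ε * (B - A).re := mul_le_mul_of_nonneg_left r2 hkε
  have r4 : 2 * k * ε * ‖B - A‖ ≤ ‖B - A‖ := mul_le_of_le_one_left (norm_nonneg _) hkε1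
  have r5 : 0 ≤ k * E ^ 3 * N := by positivity
  nlinarith
end

section
/- Let Q ∈ L²_unif(ℝ), τ ∈ L¹_unif(ℝ), K := 2(‖Q‖_{L²_unif(ℝ)} + ‖τ‖_{L¹_unif(ℝ)}), and for u ∈ H¹(ℝ) define t[u] := ∫_ℝ |u'(x)|² dx − ∫_ℝ Q(x)( conj(u'(x)) u(x) + conj(u(x)) u'(x) ) dx + ∫_ℝ τ(x) |u(x)|² dx. Let u ∈ H¹(ℝ) with ‖u‖_{L²(ℝ)} = 1 and set λ := t[u]. Then λ belongs to the set M_K defined as follows, with λ₀ := −4(2K+1)⁴ and λ₁ := 12(2K+1)⁴: either λ₀ ≤ Re λ ≤ λ₁ and |Im λ| ≤ (2K/(2K+1)) Re λ + 8K(2K+1)³, or Re λ > λ₁ and |Im λ| ≤ (32/12^{3/4}) K (Re λ)^{3/4}. -/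
open MeasureTheory

lemma nr_ii {E : Type*} [NormedAddCommGroup E] {f : ℝ → E} (hf : LocallyIntegrable f volume)
    (x y : ℝ) : IntervalIntegrable f volume x y :=
  intervalIntegrable_iff.mpr <|
    (hf.integrableOn_isCompact isCompact_uIcc).mono_set Set.uIoc_subset_uIcc

lemma nr_re_ac {u u' : ℝ → ℂ} (hl : LocallyIntegrable u' volume)
    (hu : ∀ x : ℝ, u x = u 0 + ∫ s in (0:ℝ)..x, u' s) (L : ℂ →L[ℝ] ℝ) (c d : ℝ) :
    AbsolutelyContinuousOnInterval (fun x => L (u x)) c d := by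
  have hI := nr_ii hl
  have h1 : ∀ x, L (u x) = L (u c) + ∫ s in c..x, L (u' s) := by
    intro x
    rw [L.intervalIntegral_comp_comm (hI c x), ← map_add]
    congr 1
    rw [hu x, hu c, ← intervalIntegral.integral_interval_sub_left (hI 0 x) (hI 0 c)]
    ring
  have h2 : LocallyIntegrable (fun s => L (u' s)) volume := fun x =>
    let ⟨k, hk, h⟩ := hl x
    ⟨k, hk, L.integrable_comp h⟩
  have h3 := (nr_ii h2 c d).absolutelyContinuousOnInterval_intervalIntegral
    (c := c) (by simp)
  have h4 : AbsolutelyContinuousOnInterval (fun _ : ℝ => L (u c)) c d :=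
    (LipschitzWith.const (L (u c))).lipschitzOnWith.absolutelyContinuousOnInterval
  have := h4.add h3
  have h5 : (fun x => L (u x)) = ((fun _ : ℝ => L (u c)) + fun x => ∫ s in c..x, L (u' s)) := by
    funext x
    simp [h1 x]
  rw [h5]
  exact this

lemma nr_hasDeriv {u u' : ℝ → ℂ} (hl : LocallyIntegrable u' volume)
    (hu : ∀ x : ℝ, u x = u 0 + ∫ s in (0:ℝ)..x, u' s) :
    ∀ᵐ x, HasDerivAt u (u' x) x := by
  filter_upwards [_root_.LocallyIntegrable.ae_hasDerivAt_integral hl] with x hx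
  have := (hx 0).const_add (u 0)
  rw [← (funext hu : u = fun x => u 0 + ∫ s in (0:ℝ)..x, u' s)] at this
  exact this

lemma nr_cont {u u' : ℝ → ℂ} (hl : LocallyIntegrable u' volume)
    (hu : ∀ x : ℝ, u x = u 0 + ∫ s in (0:ℝ)..x, u' s) : Continuous u := by
  have : u = fun x => u 0 + ∫ s in (0:ℝ)..x, u' s := funext hu
  rw [this]
  exact continuous_const.add (intervalIntegral.continuous_primitive (nr_ii hl) 0)

lemma nr_sq_diff {u u' : ℝ → ℂ} (hl : LocallyIntegrable u' volume)
    (hu : ∀ x : ℝ, u x = u 0 + ∫ s in (0:ℝ)..x, u' s)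
    (hprod : Integrable (fun x => ‖u x‖ * ‖u' x‖)) {t x y : ℝ}
    (hx : x ∈ Set.Icc t (t+1)) (hy : y ∈ Set.Icc t (t+1)) :
    ‖u x‖ ^ 2 ≤ ‖u y‖ ^ 2 + 2 * ∫ s in t..(t+1), ‖u s‖ * ‖u' s‖ := by
  have a1 := nr_re_ac hl hu Complex.reCLM y x
  have a2 := nr_re_ac hl hu Complex.imCLM y x
  have a3 := ((a1.fun_mul a1).fun_add (a2.fun_mul a2))
  have e := a3.integral_deriv_eq_sub
  have n1 : ∀ z : ℂ, ‖z‖ ^ 2 = z.re * z.re + z.im * z.im := fun z => by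
    rw [Complex.sq_norm, Complex.normSq_apply]
  simp only [Complex.reCLM_apply, Complex.imCLM_apply] at e
  rw [← n1, ← n1] at e
  have b1 : ‖∫ s in y..x, deriv (fun x => (u x).re * (u x).re + (u x).im * (u x).im) s‖ ≤
      |∫ s in y..x, 2 * (‖u s‖ * ‖u' s‖)| := by
    apply intervalIntegral.norm_integral_le_abs_of_norm_le
    · have := nr_hasDeriv hl hu
      filter_upwards [ae_restrict_of_ae this] with s hs
      have r1 : HasDerivAt (fun x => (u x).re) (u' s).re s :=
        (Complex.reCLM.hasFDerivAt.comp_hasDerivAt s hs)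
      have r2 : HasDerivAt (fun x => (u x).im) (u' s).im s :=
        (Complex.imCLM.hasFDerivAt.comp_hasDerivAt s hs)
      have r3 := ((r1.fun_mul r1).fun_add (r2.fun_mul r2)).deriv
      rw [r3]
      have : (u' s).re * (u s).re + (u s).re * (u' s).re +
          ((u' s).im * (u s).im + (u s).im * (u' s).im) =
          2 * ((starRingEnd ℂ) (u s) * u' s).re := by
        simp; ring
      rw [this, norm_mul]
      have h2 := Complex.abs_re_le_norm ((starRingEnd ℂ) (u s) * u' s)
      rw [norm_mul, RCLike.norm_conj] at h2
      simpa using h2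
    · exact (hprod.const_mul 2).intervalIntegrable
  have b2 : |∫ s in y..x, 2 * (‖u s‖ * ‖u' s‖)| ≤ |∫ s in t..(t+1), 2 * (‖u s‖ * ‖u' s‖)| := by
    apply intervalIntegral.abs_integral_mono_interval
    · rw [Set.uIoc_of_le (by linarith : t ≤ t + 1)]
      intro s hs
      rw [Set.mem_uIoc] at hs
      rcases hs with hs | hs
      · exact ⟨lt_of_le_of_lt hy.1 hs.1, hs.2.trans hx.2⟩
      · exact ⟨lt_of_le_of_lt hx.1 hs.1, hs.2.trans hy.2⟩
    · exact Filter.Eventually.of_forall fun s => by positivity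
    · exact (hprod.const_mul 2).intervalIntegrable
  rw [e] at b1
  have b3 : 0 ≤ ∫ s in t..(t+1), ‖u s‖ * ‖u' s‖ :=
    intervalIntegral.integral_nonneg (by linarith) fun s _ => by positivity
  rw [intervalIntegral.integral_const_mul (a := t), abs_of_nonneg (a := 2 * ∫ s in t..(t+1), ‖u s‖ * ‖u' s‖) (by positivity)] at b2
  have := le_abs_self (‖u x‖ ^ 2 - ‖u y‖ ^ 2)
  rw [Real.norm_eq_abs] at b1
  linarith

lemma nr_sup {u u' : ℝ → ℂ} (hl : LocallyIntegrable u' volume)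
    (hu : ∀ x : ℝ, u x = u 0 + ∫ s in (0:ℝ)..x, u' s)
    (hprod : Integrable (fun x => ‖u x‖ * ‖u' x‖)) (hi2 : Integrable (fun x => ‖u x‖ ^ 2))
    {t x : ℝ} (hx : x ∈ Set.Icc t (t+1)) :
    ‖u x‖ ^ 2 ≤ ∫ s in t..(t+1), (‖u s‖ ^ 2 + 2 * (‖u s‖ * ‖u' s‖)) := by
  rw [intervalIntegral.integral_add hi2.intervalIntegrable (hprod.const_mul 2).intervalIntegrable,
    intervalIntegral.integral_const_mul]
  have : ∫ _ in t..(t+1), (‖u x‖ ^ 2 - 2 * ∫ s in t..(t+1), ‖u s‖ * ‖u' s‖) ≤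
      ∫ s in t..(t+1), ‖u s‖ ^ 2 := by
    apply intervalIntegral.integral_mono_on (by linarith) intervalIntegrable_const
      hi2.intervalIntegrable
    intro y hy
    have := nr_sq_diff hl hu hprod hx hy
    linarith
  simp at this
  linarith

lemma nr_weight {u u' : ℝ → ℂ} (hl : LocallyIntegrable u' volume)
    (hu : ∀ x : ℝ, u x = u 0 + ∫ s in (0:ℝ)..x, u' s)
    (hprod : Integrable (fun x => ‖u x‖ * ‖u' x‖)) (hi2 : Integrable (fun x => ‖u x‖ ^ 2))
    {w : ℝ → ℝ} (hw : LocallyIntegrable w volume) (hw0 : ∀ x, 0 ≤ w x) {b : ℝ}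
    (hb : ∀ t, ∫ s in t..(t+1), w s ≤ b) :
    Integrable (fun x => w x * ‖u x‖ ^ 2) ∧
    ∫ x, w x * ‖u x‖ ^ 2 ≤ b * ∫ s, (‖u s‖ ^ 2 + 2 * (‖u s‖ * ‖u' s‖)) := by
  have hc := nr_cont hl hu
  have hI : ∀ x y, IntervalIntegrable (fun x => w x * ‖u x‖ ^ 2) volume x y := fun x y =>
    (nr_ii hw x y).mul_continuousOn (by fun_prop)
  set h : ℝ → ℝ := fun s => ‖u s‖ ^ 2 + 2 * (‖u s‖ * ‖u' s‖) with hh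
  have hhi : Integrable h := hi2.add (hprod.const_mul 2)
  have hh0 : ∀ s, 0 ≤ h s := fun s => by simp only [hh]; positivity
  have hb0 : 0 ≤ b := le_trans
    (intervalIntegral.integral_nonneg (by linarith) fun s _ => hw0 s) (hb 0)
  have step : ∀ t, ∫ s in t..(t+1), w s * ‖u s‖ ^ 2 ≤ b * ∫ s in t..(t+1), h s := by
    intro t
    have m0 : 0 ≤ ∫ s in t..(t+1), h s :=
      intervalIntegral.integral_nonneg (by linarith) fun s _ => hh0 s
    calc ∫ s in t..(t+1), w s * ‖u s‖ ^ 2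
        ≤ ∫ s in t..(t+1), w s * (∫ s in t..(t+1), h s) := by
          apply intervalIntegral.integral_mono_on (by linarith) (hI _ _)
            ((nr_ii hw _ _).mul_const _)
          intro x hx
          exact mul_le_mul_of_nonneg_left (nr_sup hl hu hprod hi2 hx) (hw0 x)
      _ = (∫ s in t..(t+1), w s) * (∫ s in t..(t+1), h s) := by
          rw [intervalIntegral.integral_mul_const]
      _ ≤ _ := mul_le_mul_of_nonneg_right (hb t) m0
  have key : ∀ N : ℕ, ∫ s in (-(N:ℝ))..(N:ℝ), w s * ‖u s‖ ^ 2 ≤ b * ∫ s, h s := by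
    intro N
    have s1 := intervalIntegral.sum_integral_adjacent_intervals (μ := volume)
      (f := fun x => w x * ‖u x‖ ^ 2) (a := fun k : ℕ => -(N:ℝ) + k) (n := 2 * N)
      (fun k _ => hI _ _)
    have s2 := intervalIntegral.sum_integral_adjacent_intervals (μ := volume)
      (f := h) (a := fun k : ℕ => -(N:ℝ) + k) (n := 2 * N)
      (fun k _ => hhi.intervalIntegrable)
    have e1 : -(N:ℝ) + ((0:ℕ):ℝ) = -(N:ℝ) := by simp
    have e2 : -(N:ℝ) + ((2 * N : ℕ):ℝ) = N := by push_cast; ring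
    simp only [e1, e2] at s1 s2
    rw [← s1]
    have s3 : ∫ s in (-(N:ℝ))..(N:ℝ), h s ≤ ∫ s, h s := by
      rw [intervalIntegral.integral_of_le (by linarith [Nat.cast_nonneg (α := ℝ) N])]
      exact setIntegral_le_integral hhi (Filter.Eventually.of_forall hh0)
    refine le_trans ?_ (mul_le_mul_of_nonneg_left s3 hb0)
    rw [← s2, Finset.mul_sum]
    apply Finset.sum_le_sum
    intro k _
    have := step (-(N:ℝ) + k)
    push_cast
    rw [← add_assoc]
    exact this
  have hta : Filter.Tendsto (fun N : ℕ => -(N:ℝ)) Filter.atTop Filter.atBot :=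
    Filter.tendsto_neg_atTop_atBot.comp tendsto_natCast_atTop_atTop
  have hprod' : Integrable (fun x => w x * ‖u x‖ ^ 2) := by
    apply integrable_of_intervalIntegral_norm_bounded (l := Filter.atTop)
      (a := fun N : ℕ => -(N:ℝ)) (b := fun N : ℕ => (N:ℝ)) (b * ∫ s, h s)
    · intro N
      exact (hI _ _).1
    · exact hta
    · exact tendsto_natCast_atTop_atTop
    · refine Filter.Eventually.of_forall fun N => ?_
      have : ∀ x, ‖w x * ‖u x‖ ^ 2‖ = w x * ‖u x‖ ^ 2 := fun x =>
        Real.norm_of_nonneg (mul_nonneg (hw0 x) (by positivity))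
      simp only [this]
      exact key N
  refine ⟨hprod', ?_⟩
  exact le_of_tendsto (intervalIntegral_tendsto_integral hprod' hta tendsto_natCast_atTop_atTop)
    (Filter.Eventually.of_forall key)

lemma nr_cs {f g : ℝ → ℂ} (hf : MemLp f 2 volume) (hg : MemLp g 2 volume) :
    ∫ x, ‖f x‖ * ‖g x‖ ≤ √(∫ x, ‖f x‖ ^ 2) * √(∫ x, ‖g x‖ ^ 2) := by
  have := integral_mul_norm_le_Lp_mul_Lq (μ := volume) (f := f) (g := g) (p := 2) (q := 2)
    Real.HolderConjugate.two_two (by simpa using hf) (by simpa using hg)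
  simpa [Real.sqrt_eq_rpow] using this

lemma nr_bound (Q τ u u' : ℝ → ℂ)
    (hQ : InStepL2 Q) (hτ : InStepL1 τ) (hu : InH1 u u')
    (hnorm : (∫ x : ℝ, ‖u x‖ ^ 2) = 1) :
    ‖tform Q τ u u' - ((∫ x, ‖u' x‖ ^ 2 : ℝ) : ℂ)‖ ≤
      2 * (stepL2 Q * √(1 + 2 * √(∫ x, ‖u' x‖ ^ 2)) * √(∫ x, ‖u' x‖ ^ 2))
        + stepL1 τ * (1 + 2 * √(∫ x, ‖u' x‖ ^ 2)) := by
  obtain ⟨hl, hux, hu2, hu2'⟩ := hu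
  obtain ⟨hQm, hQl, hQb⟩ := hQ
  obtain ⟨hτl, hτb⟩ := hτ
  have hprod : Integrable (fun x => ‖u x‖ * ‖u' x‖) := hu2.norm.integrable_mul hu2'.norm
  have hi2 : Integrable (fun x => ‖u x‖ ^ 2) := hu2.integrable_norm_pow (by norm_num)
  set v := √(∫ x, ‖u' x‖ ^ 2) with hv
  have hM : ∫ s, (‖u s‖ ^ 2 + 2 * (‖u s‖ * ‖u' s‖)) ≤ 1 + 2 * v := by
    rw [integral_add hi2 (hprod.const_mul 2), integral_const_mul, hnorm]
    have := nr_cs hu2 hu2'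
    rw [hnorm, Real.sqrt_one, one_mul] at this
    linarith
  have hs2 : ∀ t, ∫ s in t..(t+1), ‖Q s‖ ^ 2 ≤ stepL2 Q ^ 2 := by
    intro t
    have h1 := le_ciSup hQb t
    have h0 : 0 ≤ ∫ s in t..(t+1), ‖Q s‖ ^ 2 :=
      intervalIntegral.integral_nonneg (by linarith) fun s _ => by positivity
    rw [stepL2, Real.sq_sqrt (h0.trans h1)]
    exact h1
  have hs1 : ∀ t, ∫ s in t..(t+1), ‖τ s‖ ≤ stepL1 τ := fun t => le_ciSup hτb t
  have h10 : 0 ≤ stepL1 τ := le_trans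
    (intervalIntegral.integral_nonneg (by linarith) fun s _ => norm_nonneg _) (hs1 0)
  have h20 : 0 ≤ stepL2 Q := Real.sqrt_nonneg _
  have hτl' : LocallyIntegrable (fun s => ‖τ s‖) volume := fun x =>
    let ⟨k, hk, h⟩ := hτl x
    ⟨k, hk, h.norm⟩
  obtain ⟨-, T⟩ := nr_weight hl hux hprod hi2 hτl' (fun _ => norm_nonneg _) hs1
  obtain ⟨QI, QT⟩ := nr_weight hl hux hprod hi2 hQl (fun _ => by positivity) hs2
  have T' := T.trans (mul_le_mul_of_nonneg_left hM h10)
  have QT' := QT.trans (mul_le_mul_of_nonneg_left hM (sq_nonneg (stepL2 Q)))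
  have hQu : MemLp (fun x => Q x * u x) 2 volume := by
    refine (memLp_two_iff_integrable_sq_norm (hQm.mul hu2.1)).mpr ?_
    simpa [mul_pow] using QI
  have c1 := nr_cs hQu hu2'
  have c2 : √(∫ x, ‖Q x * u x‖ ^ 2) ≤ stepL2 Q * √(1 + 2 * v) := by
    have e : stepL2 Q * √(1 + 2 * v) = √(stepL2 Q ^ 2 * (1 + 2 * v)) := by
      rw [Real.sqrt_mul (sq_nonneg _), Real.sqrt_sq h20]
    rw [e]
    apply Real.sqrt_le_sqrt
    simpa [mul_pow] using QT'
  have c3 := c1.trans (mul_le_mul_of_nonneg_right c2 (Real.sqrt_nonneg _))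
  have d1 : ‖∫ x : ℝ, Q x * ((starRingEnd ℂ) (u' x) * u x + (starRingEnd ℂ) (u x) * u' x)‖ ≤
      2 * ∫ x, ‖Q x * u x‖ * ‖u' x‖ := by
    rw [← integral_const_mul]
    apply norm_integral_le_of_norm_le ((hQu.norm.integrable_mul hu2'.norm).const_mul 2)
    refine Filter.Eventually.of_forall fun x => ?_
    have := norm_add_le ((starRingEnd ℂ) (u' x) * u x) ((starRingEnd ℂ) (u x) * u' x)
    rw [norm_mul, norm_mul, RCLike.norm_conj, RCLike.norm_conj] at this
    have := mul_le_mul_of_nonneg_left this (norm_nonneg (Q x))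
    simp only [norm_mul, Pi.mul_apply]
    rw [← norm_mul] at *
    simp only [norm_mul] at *
    nlinarith
  have d2 : ‖∫ x : ℝ, τ x * (‖u x‖ : ℂ) ^ 2‖ ≤ ∫ x, ‖τ x‖ * ‖u x‖ ^ 2 := by
    refine (norm_integral_le_integral_norm _).trans (le_of_eq ?_)
    congr 1
    funext x
    simp
  unfold tform
  have e : ∀ a b c : ℂ, a - b + c - a = c - b := fun a b c => by ring
  rw [e]
  refine (norm_sub_le _ _).trans ?_
  linarith

lemma nr_final (a b v : ℝ) (z : ℂ) (ha : 0 ≤ a) (hb : 0 ≤ b) (hv : 0 ≤ v)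
    (hz : ‖z - ((v ^ 2 : ℝ) : ℂ)‖ ≤ 2 * (a * √(1 + 2 * v) * v) + b * (1 + 2 * v))
    (K : ℝ) (hK : K = 2 * (a + b)) :
    ((-4 * (2 * K + 1) ^ 4 ≤ z.re ∧ z.re ≤ 12 * (2 * K + 1) ^ 4 ∧
        |z.im| ≤ 2 * K / (2 * K + 1) * z.re + 8 * K * (2 * K + 1) ^ 3) ∨
      (12 * (2 * K + 1) ^ 4 < z.re ∧
        |z.im| ≤ 32 / (12 : ℝ) ^ ((3 : ℝ) / 4) * K * z.re ^ ((3 : ℝ) / 4))) := by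
  have hK0 : 0 ≤ K := by rw [hK]; positivity
  set s := √(1 + 2 * v) with hs
  have hs0 : 0 ≤ s := Real.sqrt_nonneg _
  have hss : s ^ 2 = 1 + 2 * v := Real.sq_sqrt (by positivity)
  obtain ⟨g, hg⟩ : ∃ g, g = max (s * v) ((1 + 2 * v) / 2) := ⟨_, rfl⟩
  have g1 : s * v ≤ g := hg ▸ le_max_left _ _
  have g2 : (1 + 2 * v) / 2 ≤ g := hg ▸ le_max_right _ _
  have g0 : 0 ≤ g := le_trans (by positivity) g1
  have hR : 2 * (a * s * v) + b * (1 + 2 * v) ≤ K * g := by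
    rw [hK]
    nlinarith [mul_le_mul_of_nonneg_left g1 ha, mul_le_mul_of_nonneg_left g2 hb]
  have hzn := hz.trans hR
  have hre : |z.re - v ^ 2| ≤ K * g := by
    have := (Complex.abs_re_le_norm _).trans hzn
    simpa only [Complex.sub_re, Complex.ofReal_re] using this
  have him : |z.im| ≤ K * g := by
    have := (Complex.abs_im_le_norm _).trans hzn
    simpa only [Complex.sub_im, Complex.ofReal_im, sub_zero] using this
  obtain ⟨L, hL⟩ : ∃ L, L = 2 * K + 1 := ⟨_, rfl⟩
  rw [← hL]
  have hL1 : 1 ≤ L := by linarith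
  have hL2 : 1 ≤ L ^ 2 := one_le_pow₀ hL1
  have hL4 : L ^ 2 ≤ L ^ 4 := pow_le_pow_right₀ hL1 (by norm_num)
  have hLL : L ≤ L ^ 2 := le_self_pow₀ hL1 (by norm_num)
  have hLg : L * g ≤ v ^ 2 + L ^ 4 := by
    rw [hg]
    rcases max_cases (s * v) ((1 + 2 * v) / 2) with ⟨h, _⟩ | ⟨h, _⟩ <;> rw [h]
    · nlinarith [sq_nonneg (L * s - v), sq_nonneg (L ^ 2 - v)]
    · nlinarith [sq_nonneg (L - v)]
  have hKg : K * g ≤ (v ^ 2 + L ^ 4) / 2 := by nlinarith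
  obtain ⟨hr1, hr2⟩ := abs_le.mp hre
  by_cases hc : z.re ≤ 12 * L ^ 4
  · left
    refine ⟨by nlinarith [sq_nonneg v], hc, him.trans ?_⟩
    have hLp : 0 < L := by linarith
    have : 2 * K / L * z.re + 8 * K * L ^ 3 = (K * (2 * z.re + 8 * L ^ 4)) / L := by
      field_simp
    rw [this, le_div_iff₀ hLp, mul_assoc]
    apply mul_le_mul_of_nonneg_left _ hK0
    nlinarith [sq_nonneg v]
  · right
    push Not at hc
    refine ⟨hc, him.trans ?_⟩
    obtain ⟨r, hr⟩ : ∃ r, r = z.re := ⟨_, rfl⟩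
    rw [← hr] at hc hr1 hr2 ⊢
    clear hz hzn hre him hR hK
    have hr12 : 12 ≤ r := by nlinarith
    have hr0 : 0 ≤ r := by linarith
    have hvr : v ^ 2 ≤ 25 / 12 * r := by linarith
    have hq : (1 + 2 * v) ^ 2 ≤ 17 * r := by nlinarith [sq_nonneg (1 - 2 * v)]
    have hr3 : r ^ 2 ≤ r ^ 3 := pow_le_pow_right₀ (by linarith) (by norm_num)
    have hg4 : g ^ 4 ≤ (32 : ℝ) ^ 4 / 12 ^ 3 * r ^ 3 := by
      rw [hg]
      rcases max_cases (s * v) ((1 + 2 * v) / 2) with ⟨h, _⟩ | ⟨h, _⟩ <;> rw [h]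
      · have e : (s * v) ^ 4 = (1 + 2 * v) ^ 2 * (v ^ 2) ^ 2 := by rw [← hss]; ring
        rw [e]
        have e2 : (v ^ 2) ^ 2 ≤ (25 / 12 * r) ^ 2 := pow_le_pow_left₀ (sq_nonneg _) hvr 2
        have := mul_le_mul hq e2 (by positivity) (by positivity)
        have r3 : 0 ≤ r ^ 3 := by positivity
        have e3 : 17 * r * (25 / 12 * r) ^ 2 = 17 * (25 / 12) ^ 2 * r ^ 3 := by ring
        rw [e3] at this
        linarith
      · have e : ((1 + 2 * v) / 2) ^ 4 = ((1 + 2 * v) ^ 2) ^ 2 / 16 := by ring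
        rw [e]
        have e2 : ((1 + 2 * v) ^ 2) ^ 2 ≤ (17 * r) ^ 2 := pow_le_pow_left₀ (sq_nonneg _) hq 2
        have r3 : 0 ≤ r ^ 3 := by positivity
        rw [mul_pow] at e2
        linarith
    have hp : ∀ x : ℝ, 0 ≤ x → (x ^ ((3 : ℝ) / 4)) ^ 4 = x ^ 3 := by
      intro x hx
      rw [← Real.rpow_natCast, ← Real.rpow_mul hx, ← Real.rpow_natCast]
      norm_num
    have hgle : g ≤ 32 / (12 : ℝ) ^ ((3 : ℝ) / 4) * r ^ ((3 : ℝ) / 4) := by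
      apply le_of_pow_le_pow_left₀ (n := 4) (by norm_num) (by positivity)
      rw [mul_pow, div_pow, hp _ hr0, hp _ (by norm_num)]
      exact hg4
    calc K * g ≤ K * (32 / (12 : ℝ) ^ ((3 : ℝ) / 4) * r ^ ((3 : ℝ) / 4)) :=
          mul_le_mul_of_nonneg_left hgle hK0
      _ = _ := by ring

/-- Localization of the numerical range of the Schrödinger form: for a unit vector
`u ∈ H¹(ℝ)` the value `λ = t[u]` lies in the set `M_K` (with `λ₀ = -4(2K+1)⁴` and
`λ₁ = 12(2K+1)⁴`): either `λ₀ ≤ Re λ ≤ λ₁` and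
`|Im λ| ≤ (2K/(2K+1)) Re λ + 8K(2K+1)³`, or `Re λ > λ₁` and
`|Im λ| ≤ (32/12^{3/4}) K (Re λ)^{3/4}`. -/
theorem numerical_range_schrodinger (Q τ u u' : ℝ → ℂ)
    (hQ : InStepL2 Q) (hτ : InStepL1 τ) (hu : InH1 u u')
    (hnorm : (∫ x : ℝ, ‖u x‖ ^ 2) = 1) :
    ((-4 * (2 * Kc Q τ + 1) ^ 4 ≤ (tform Q τ u u').re ∧
        (tform Q τ u u').re ≤ 12 * (2 * Kc Q τ + 1) ^ 4 ∧
        |(tform Q τ u u').im| ≤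
          2 * Kc Q τ / (2 * Kc Q τ + 1) * (tform Q τ u u').re
            + 8 * Kc Q τ * (2 * Kc Q τ + 1) ^ 3) ∨
      (12 * (2 * Kc Q τ + 1) ^ 4 < (tform Q τ u u').re ∧
        |(tform Q τ u u').im| ≤
          32 / (12 : ℝ) ^ ((3 : ℝ) / 4) * Kc Q τ * (tform Q τ u u').re ^ ((3 : ℝ) / 4))) := by
  have h := nr_bound Q τ u u' hQ hτ hu hnorm
  have h0 : 0 ≤ ∫ x, ‖u' x‖ ^ 2 := integral_nonneg fun x => by positivity
  have h10 : 0 ≤ stepL1 τ := Real.iSup_nonneg fun t =>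
    intervalIntegral.integral_nonneg (by linarith) fun s _ => norm_nonneg _
  refine nr_final (stepL2 Q) (stepL1 τ) √(∫ x, ‖u' x‖ ^ 2) _ (Real.sqrt_nonneg _) h10
    (Real.sqrt_nonneg _) ?_ _ rfl
  rw [Real.sq_sqrt h0]
  exact h
end

section
/- Let Q ∈ L²_unif(ℝ), τ ∈ L¹_unif(ℝ), K := 2(‖Q‖_{L²_unif(ℝ)} + ‖τ‖_{L¹_unif(ℝ)}), and for u ∈ H¹(ℝ) define t[u] := ∫_ℝ |u'(x)|² dx − ∫_ℝ Q(x)( conj(u'(x)) u(x) + conj(u(x)) u'(x) ) dx + ∫_ℝ τ(x) |u(x)|² dx. Then for every u ∈ H¹(ℝ) with ‖u‖_{L²(ℝ)} = 1, the complex number λ := t[u] satisfies |Im λ| ≤ 5K ( Re λ + 4(2K+1)⁴ )^{3/4}. -/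
open MeasureTheory

lemma aux_arith (K r P R : ℝ) (q s : ℝ) (hq : 0 ≤ q) (hs : 0 ≤ s) (hK : K = 2 * (q + s))
    (hr : 0 ≤ r) (hP : P ≤ 2 * (q * √(1 + 2 * r) * r) + s * (1 + 2 * r)) 
    (hR : r ^ 2 - P ≤ R) :
    P ≤ 5 * K * (R + 4 * (2 * K + 1) ^ 4) ^ ((3 : ℝ) / 4) := by
  obtain ⟨v, hv⟩ : ∃ v, v = √(1 + 2 * r) := ⟨_, rfl⟩
  have hv2 : v ^ 2 = 1 + 2 * r := by rw [hv, Real.sq_sqrt (by linarith)]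
  have hv1 : 1 ≤ v := by rw [hv]; exact Real.one_le_sqrt.2 (by linarith)
  rw [← hv] at hP
  have hrv : r = (v ^ 2 - 1) / 2 := by linarith
  have hP2 : P ≤ K * v ^ 3 / 2 := by
    rw [← hv2] at hP
    have h1 : q * v * r ≤ q * v * (v ^ 2 / 2) := by gcongr; linarith
    have h2 : s * v ^ 2 ≤ s * v ^ 3 := by gcongr <;> omega
    rw [hK]; nlinarith
  have hK0 : 0 ≤ K := by rw [hK]; positivity
  have key : v ^ 4 / 20 ≤ R + 4 * (2 * K + 1) ^ 4 := by
    obtain ⟨c, hc⟩ : ∃ c, c = 2 * K + 1 := ⟨_, rfl⟩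
    rw [← hc]
    have hc1 : 1 ≤ c := by linarith
    have h3 : K * v ^ 3 / 2 ≤ c * v ^ 3 / 4 := by
      have : 0 ≤ v ^ 3 := by positivity
      nlinarith
    have h4 : v ^ 4 / 4 - v ^ 2 / 2 + 1 / 4 - c * v ^ 3 / 4 ≤ R := by
      have : r ^ 2 = v ^ 4 / 4 - v ^ 2 / 2 + 1 / 4 := by rw [hrv]; ring
      linarith
    have h5 : v ^ 2 ≤ c ^ 2 * v ^ 2 := by
      have : 1 ≤ c ^ 2 := by nlinarith
      nlinarith [sq_nonneg v]
    have h6 : 0 ≤ v ^ 4 / 5 - c * v ^ 3 / 4 - c ^ 2 * v ^ 2 / 2 + 4 * c ^ 4 := by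
      nlinarith [sq_nonneg (v ^ 2 - 5 / 8 * c * v - 2 * c ^ 2), sq_nonneg (v * c - 2 * c ^ 2), sq_nonneg (v * c), sq_nonneg (c ^ 2), sq_nonneg (v ^ 2 - 2 * c ^ 2),
        sq_nonneg (v ^ 2 - c * v - c ^ 2), sq_nonneg (v * c - c ^ 2)]
    nlinarith
  have h7 : v ^ 3 / 10 ≤ (R + 4 * (2 * K + 1) ^ 4) ^ ((3 : ℝ) / 4) := by
    have h8 : (v ^ 4 / 20) ^ ((3 : ℝ) / 4) ≤ (R + 4 * (2 * K + 1) ^ 4) ^ ((3 : ℝ) / 4) :=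
      Real.rpow_le_rpow (by positivity) key (by norm_num)
    refine le_trans ?_ h8
    have h9 : v ^ 3 / 10 = (((v ^ 3 / 10) ^ 4) ^ ((1 : ℝ) / 4)) := by
      have := Real.pow_rpow_inv_natCast (x := v ^ 3 / 10) (n := 4) (by positivity) (by norm_num)
      rw [one_div]; exact_mod_cast this.symm
    have h10 : (v ^ 4 / 20) ^ ((3 : ℝ) / 4) = ((v ^ 4 / 20) ^ 3) ^ ((1 : ℝ) / 4) := by
      rw [← Real.rpow_natCast (v ^ 4 / 20) 3, ← Real.rpow_mul (by positivity)]; norm_num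
    rw [h9, h10]
    apply Real.rpow_le_rpow (by positivity) _ (by norm_num)
    have : 0 ≤ v ^ 12 := by positivity
    ring_nf; linarith
  calc P ≤ 5 * K * (v ^ 3 / 10) := by linarith
    _ ≤ _ := by gcongr

lemma aux_sq_sub (u u' : ℝ → ℂ) (hu' : LocallyIntegrable u' volume)
    (hu : ∀ x : ℝ, u x = u 0 + ∫ s in (0:ℝ)..x, u' s) (a b : ℝ) :
    ‖u b‖ ^ 2 - ‖u a‖ ^ 2 ≤ |∫ x in a..b, 2 * (‖u x‖ * ‖u' x‖)| := by
  have hii : ∀ a b, IntervalIntegrable u' volume a b := fun a b =>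
    intervalIntegrable_iff.mpr <|
      (hu'.integrableOn_isCompact isCompact_uIcc).mono_set Set.uIoc_subset_uIcc
  have huc : Continuous u := by
    rw [funext hu]
    exact continuous_const.add (intervalIntegral.continuous_primitive hii 0)
  have hre : ∀ a b, IntervalIntegrable (fun x => (u' x).re) volume a b := fun a b => by
    have := hii a b
    rw [intervalIntegrable_iff] at this ⊢
    exact this.re
  have him : ∀ a b, IntervalIntegrable (fun x => (u' x).im) volume a b := fun a b => by
    have := hii a b
    rw [intervalIntegrable_iff] at this ⊢
    exact this.im
  have ure : ∀ x, (u x).re = (u a).re + ∫ s in a..x, (u' s).re := by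
    intro x
    have h1 : u x = u a + ∫ s in a..x, u' s := by
      rw [hu x, hu a, add_assoc, intervalIntegral.integral_add_adjacent_intervals (hii _ _) (hii _ _)]
    have h2 := Complex.reCLM.intervalIntegral_comp_comm (hii a x)
    simp only [Complex.reCLM_apply] at h2
    rw [h1, h2]; simp
  have uim : ∀ x, (u x).im = (u a).im + ∫ s in a..x, (u' s).im := by
    intro x
    have h1 : u x = u a + ∫ s in a..x, u' s := by
      rw [hu x, hu a, add_assoc, intervalIntegral.integral_add_adjacent_intervals (hii _ _) (hii _ _)]
    have h2 := Complex.imCLM.intervalIntegral_comp_comm (hii a x)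
    simp only [Complex.imCLM_apply] at h2
    rw [h1, h2]; simp
  have hconst : ∀ c : ℝ, AbsolutelyContinuousOnInterval (fun _ : ℝ => c) a b := by
    intro c
    exact (LipschitzWith.const c).lipschitzOnWith.absolutelyContinuousOnInterval
  have acre : AbsolutelyContinuousOnInterval (fun x => (u x).re) a b := by
    rw [funext ure]
    exact (hconst _).fun_add ((hre a b).absolutelyContinuousOnInterval_intervalIntegral (c := a) (by simp))
  have acim : AbsolutelyContinuousOnInterval (fun x => (u x).im) a b := by
    rw [funext uim]
    exact (hconst _).fun_add ((him a b).absolutelyContinuousOnInterval_intervalIntegral (c := a) (by simp))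
  have ac : AbsolutelyContinuousOnInterval (fun x => (u x).re * (u x).re + (u x).im * (u x).im) a b :=
    (acre.fun_mul acre).fun_add (acim.fun_mul acim)
  have hd := ac.integral_deriv_eq_sub
  have e : ∀ z : ℂ, ‖z‖ ^ 2 = z.re * z.re + z.im * z.im := fun z => by
    rw [← Complex.normSq_eq_norm_sq, Complex.normSq_apply]
  rw [e, e, ← hd]
  refine (le_abs_self _).trans ?_
  rw [← Real.norm_eq_abs]
  apply intervalIntegral.norm_integral_le_abs_of_norm_le
  · rw [ae_restrict_iff' measurableSet_uIoc]
    filter_upwards [LocallyIntegrable.ae_hasDerivAt_integral hu'] with x hx _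
    have hx0 : HasDerivAt u (u' x) x := by
      rw [funext hu]; exact (hx 0).const_add _
    have h1 : HasDerivAt (fun x => (u x).re) (u' x).re x :=
      Complex.reCLM.hasFDerivAt.comp_hasDerivAt x hx0
    have h2 : HasDerivAt (fun x => (u x).im) (u' x).im x :=
      Complex.imCLM.hasFDerivAt.comp_hasDerivAt x hx0
    rw [((h1.fun_mul h1).fun_add (h2.fun_mul h2)).deriv, Real.norm_eq_abs, ← norm_mul]
    have := Complex.abs_re_le_norm (starRingEnd ℂ (u x) * u' x)
    rw [norm_mul, Complex.norm_conj, ← norm_mul] at this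
    have h3 : (u' x).re * (u x).re + (u x).re * (u' x).re + ((u' x).im * (u x).im + (u x).im * (u' x).im)
      = 2 * (starRingEnd ℂ (u x) * u' x).re := by
      simp; ring
    rw [h3, abs_mul, abs_two]; gcongr
  · exact (((hii a b).norm.continuousOn_mul huc.norm.continuousOn)).const_mul 2

lemma aux_tile (f g h : ℝ → ℝ) (S : ℝ) (hf : LocallyIntegrable f volume) (hf0 : ∀ x, 0 ≤ f x)
    (hS : ∀ t : ℝ, ∫ s in t..(t + 1), f s ≤ S) (hg : AEStronglyMeasurable g volume) (hg0 : ∀ x, 0 ≤ g x)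
    (hh : Integrable h) (hh0 : ∀ x, 0 ≤ h x)
    (hgh : ∀ n : ℝ, ∀ x ∈ Set.Ioc n (n + 1), g x ≤ ∫ y in Set.Ioc n (n + 1), h y) :
    Integrable (fun x => f x * g x) ∧ ∫ x, f x * g x ≤ S * ∫ x, h x := by
  have hfi : ∀ n : ℝ, IntegrableOn f (Set.Ioc n (n + 1)) := fun n =>
    (hf.integrableOn_isCompact isCompact_Icc).mono_set Set.Ioc_subset_Icc_self
  have hS0 : 0 ≤ S := le_trans (intervalIntegral.integral_nonneg (by linarith) (fun x _ => hf0 x)) (hS 0)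
  have dec : ∀ F : ℝ → ENNReal, ∫⁻ x, F x = ∑' n : ℤ, ∫⁻ x in Set.Ioc (n : ℝ) (n + 1), F x := by
    intro F
    rw [← lintegral_iUnion (fun n => measurableSet_Ioc) (Set.pairwise_disjoint_Ioc_intCast ℝ),
      iUnion_Ioc_intCast, setLIntegral_univ]
  have main : ∫⁻ x, ENNReal.ofReal (f x * g x) ≤ ENNReal.ofReal S * ∫⁻ x, ENNReal.ofReal (h x) := by
    rw [dec, dec, ← ENNReal.tsum_mul_left]
    refine ENNReal.tsum_le_tsum fun n => ?_
    calc ∫⁻ x in Set.Ioc (n : ℝ) (n + 1), ENNReal.ofReal (f x * g x)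
        ≤ ∫⁻ x in Set.Ioc (n : ℝ) (n + 1), ENNReal.ofReal (f x) * ENNReal.ofReal (∫ y in Set.Ioc (n : ℝ) (n + 1), h y) := by
          refine setLIntegral_mono' measurableSet_Ioc fun x hx => ?_
          rw [ENNReal.ofReal_mul (hf0 x)]
          gcongr
          exact hgh n x hx
      _ = (∫⁻ x in Set.Ioc (n : ℝ) (n + 1), ENNReal.ofReal (f x)) * ENNReal.ofReal (∫ y in Set.Ioc (n : ℝ) (n + 1), h y) :=
          lintegral_mul_const' _ _ ENNReal.ofReal_ne_top
      _ ≤ _ := by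
          rw [← ofReal_integral_eq_lintegral_ofReal (hfi n) (Filter.Eventually.of_forall hf0),
            ← ofReal_integral_eq_lintegral_ofReal hh.integrableOn (Filter.Eventually.of_forall hh0)]
          gcongr
          have := hS n
          rwa [intervalIntegral.integral_of_le (by linarith)] at this
  rw [← ofReal_integral_eq_lintegral_ofReal hh (Filter.Eventually.of_forall hh0),
    ← ENNReal.ofReal_mul hS0] at main
  have hint : Integrable (fun x => f x * g x) := by
    refine ⟨hf.aestronglyMeasurable.mul hg, ?_⟩
    rw [hasFiniteIntegral_iff_ofReal (Filter.Eventually.of_forall fun x => mul_nonneg (hf0 x) (hg0 x))]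
    exact main.trans_lt ENNReal.ofReal_lt_top
  refine ⟨hint, ?_⟩
  rw [← ofReal_integral_eq_lintegral_ofReal hint (Filter.Eventually.of_forall fun x => mul_nonneg (hf0 x) (hg0 x))] at main
  exact (ENNReal.ofReal_le_ofReal_iff (mul_nonneg hS0 (integral_nonneg hh0))).1 main

lemma aux_cs (f g : ℝ → ℝ) (hf0 : ∀ x, 0 ≤ f x) (hg0 : ∀ x, 0 ≤ g x) (hf : MemLp f 2 volume)
    (hg : MemLp g 2 volume) : ∫ x, f x * g x ≤ √(∫ x, f x ^ 2) * √(∫ x, g x ^ 2) := by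
  have := integral_mul_le_Lp_mul_Lq_of_nonneg (μ := volume) (f := f) (g := g) Real.HolderConjugate.two_two
    (Filter.Eventually.of_forall hf0) (Filter.Eventually.of_forall hg0) (by simpa using hf) (by simpa using hg)
  simpa [Real.sqrt_eq_rpow] using this

/-- Parabola localization of the numerical range (hence the spectrum) of the Schrödinger
operator `S(q)`, `q = Q' + τ`: for a unit vector `u ∈ H¹(ℝ)`, `λ = t[u]` satisfies
`|Im λ| ≤ 5K (Re λ + 4(2K+1)⁴)^{3/4}`. -/
theorem spectrum_in_parabola (Q τ u u' : ℝ → ℂ)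
    (hQ : InStepL2 Q) (hτ : InStepL1 τ) (hu : InH1 u u')
    (hnorm : (∫ x : ℝ, ‖u x‖ ^ 2) = 1) :
    |(tform Q τ u u').im| ≤
      5 * Kc Q τ * ((tform Q τ u u').re + 4 * (2 * Kc Q τ + 1) ^ 4) ^ ((3 : ℝ) / 4) := by
  obtain ⟨hQm, hQl, hQb⟩ := hQ
  obtain ⟨hτl, hτb⟩ := hτ
  obtain ⟨hu'l, hux, hu2, hu'2⟩ := hu
  have i1 : Integrable (fun x => ‖u x‖ ^ 2) := hu2.integrable_norm_pow (by norm_num)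
  have i2 : Integrable (fun x => ‖u x‖ * ‖u' x‖) := hu2.norm.integrable_mul hu'2.norm
  have i3 : Integrable (fun x => ‖u x‖ ^ 2 + 2 * (‖u x‖ * ‖u' x‖)) := i1.add (i2.const_mul 2)
  obtain ⟨r, hr⟩ : ∃ r, r = √(∫ x, ‖u' x‖ ^ 2) := ⟨_, rfl⟩
  have hr0 : 0 ≤ r := hr ▸ Real.sqrt_nonneg _
  have hr2 : ∫ x, ‖u' x‖ ^ 2 = r ^ 2 := by
    rw [hr, Real.sq_sqrt (integral_nonneg fun x => by positivity)]
  have hI : ∫ x, (‖u x‖ ^ 2 + 2 * (‖u x‖ * ‖u' x‖)) ≤ 1 + 2 * r := by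
    rw [integral_add i1 (i2.const_mul 2), hnorm, integral_const_mul]
    have := aux_cs (fun x => ‖u x‖) (fun x => ‖u' x‖) (fun x => norm_nonneg _) (fun x => norm_nonneg _) hu2.norm hu'2.norm
    rw [hnorm, ← hr, Real.sqrt_one, one_mul] at this
    linarith
  have hloc : ∀ n : ℝ, ∀ x ∈ Set.Ioc n (n + 1), ‖u x‖ ^ 2 ≤
      ∫ y in Set.Ioc n (n + 1), (‖u y‖ ^ 2 + 2 * (‖u y‖ * ‖u' y‖)) := by
    intro n x hx
    rw [integral_add i1.integrableOn (i2.const_mul 2).integrableOn]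
    have h1 : ∀ y ∈ Set.Ioc n (n + 1), ‖u x‖ ^ 2 - ∫ y in Set.Ioc n (n + 1), 2 * (‖u y‖ * ‖u' y‖) ≤ ‖u y‖ ^ 2 := by
      intro y hy
      have h2 := aux_sq_sub u u' hu'l hux y x
      have h3 : |∫ x in y..x, 2 * (‖u x‖ * ‖u' x‖)| ≤ ∫ y in Set.Ioc n (n + 1), 2 * (‖u y‖ * ‖u' y‖) := by
        rw [intervalIntegral.abs_integral_eq_abs_integral_uIoc, abs_of_nonneg (integral_nonneg fun x => by positivity)]
        refine setIntegral_mono_set (i2.const_mul 2).integrableOn (Filter.Eventually.of_forall fun x => by positivity) ?_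
        refine Filter.Eventually.of_forall fun z hz => ?_
        have hz' : z ∈ Set.uIoc y x := hz
        rw [Set.mem_uIoc] at hz'
        show z ∈ Set.Ioc n (n + 1)
        simp only [Set.mem_Ioc] at *
        rcases hz' with h | h <;> constructor <;> linarith
      linarith
    have h4 := setIntegral_mono_on (μ := volume) (integrableOn_const (by simp)) i1.integrableOn measurableSet_Ioc h1
    simp only [integral_const, MeasurableSet.univ, measureReal_restrict_apply, Set.univ_inter, Real.volume_real_Ioc, smul_eq_mul] at h4
    norm_num at h4
    linarith
  have hgm : AEStronglyMeasurable (fun x => ‖u x‖ ^ 2) volume := i1.aestronglyMeasurable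
  have hs0 : 0 ≤ stepL1 τ := Real.iSup_nonneg fun t => intervalIntegral.integral_nonneg (by linarith) fun x _ => norm_nonneg _
  have hq2 : (⨆ t : ℝ, ∫ s in t..(t + 1), ‖Q s‖ ^ 2) = stepL2 Q ^ 2 := by
    rw [stepL2, Real.sq_sqrt]
    exact Real.iSup_nonneg fun t => intervalIntegral.integral_nonneg (by linarith) fun x _ => by positivity
  have hq0 : 0 ≤ stepL2 Q := Real.sqrt_nonneg _
  obtain ⟨-, T2⟩ := aux_tile (fun x => ‖τ x‖) (fun x => ‖u x‖ ^ 2) _ (stepL1 τ) (fun x => (hτl x).norm) (fun x => norm_nonneg _)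
    (fun t => le_ciSup hτb t) hgm (fun x => by positivity) i3 (fun x => by positivity) hloc
  obtain ⟨Q1, Q2⟩ := aux_tile (fun x => ‖Q x‖ ^ 2) (fun x => ‖u x‖ ^ 2) _ (stepL2 Q ^ 2) hQl (fun x => by positivity)
    (fun t => hq2 ▸ le_ciSup hQb t) hgm (fun x => by positivity) i3 (fun x => by positivity) hloc
  have T3 : ‖∫ x : ℝ, τ x * (‖u x‖ : ℂ) ^ 2‖ ≤ stepL1 τ * (1 + 2 * r) := by
    refine (norm_integral_le_integral_norm _).trans ?_
    simp only [norm_mul, norm_pow, Complex.norm_real, norm_norm]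
    exact T2.trans (by gcongr)
  have hQu : MemLp (fun x => ‖Q x‖ * ‖u x‖) 2 volume := by
    refine (memLp_two_iff_integrable_sq (hQm.norm.mul hu2.1.norm)).2 ?_
    simpa only [Pi.mul_apply, mul_pow] using Q1
  have Q3 : ‖∫ x : ℝ, Q x * ((starRingEnd ℂ) (u' x) * u x + (starRingEnd ℂ) (u x) * u' x)‖
      ≤ 2 * (stepL2 Q * √(1 + 2 * r) * r) := by
    have c := aux_cs (fun x => ‖Q x‖ * ‖u x‖) (fun x => ‖u' x‖) (fun x => by positivity) (fun x => norm_nonneg _) hQu hu'2.norm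
    rw [← hr] at c
    have c2 : √(∫ x, (‖Q x‖ * ‖u x‖) ^ 2) ≤ stepL2 Q * √(1 + 2 * r) := by
      rw [← Real.sqrt_sq hq0, ← Real.sqrt_mul (sq_nonneg _)]
      apply Real.sqrt_le_sqrt
      simp only [mul_pow]
      exact Q2.trans (by gcongr)
    have c3 : ‖∫ x : ℝ, Q x * ((starRingEnd ℂ) (u' x) * u x + (starRingEnd ℂ) (u x) * u' x)‖
        ≤ ∫ x, 2 * ((‖Q x‖ * ‖u x‖) * ‖u' x‖) := by
      refine norm_integral_le_of_norm_le ((hQu.integrable_mul hu'2.norm).const_mul 2) ?_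
      refine Filter.Eventually.of_forall fun x => ?_
      rw [norm_mul]
      have : ‖(starRingEnd ℂ) (u' x) * u x + (starRingEnd ℂ) (u x) * u' x‖ ≤ 2 * (‖u x‖ * ‖u' x‖) := by
        refine (norm_add_le _ _).trans ?_
        simp only [norm_mul, Complex.norm_conj]
        linarith
      calc _ ≤ ‖Q x‖ * (2 * (‖u x‖ * ‖u' x‖)) := by gcongr
        _ = _ := by ring
    rw [integral_const_mul] at c3
    have : √(∫ x, (‖Q x‖ * ‖u x‖) ^ 2) * r ≤ stepL2 Q * √(1 + 2 * r) * r := by gcongr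
    linarith
  obtain ⟨A, hA⟩ : ∃ A, A = ∫ x : ℝ, Q x * ((starRingEnd ℂ) (u' x) * u x + (starRingEnd ℂ) (u x) * u' x) := ⟨_, rfl⟩
  obtain ⟨B, hB⟩ : ∃ B, B = ∫ x : ℝ, τ x * (‖u x‖ : ℂ) ^ 2 := ⟨_, rfl⟩
  have ht : tform Q τ u u' = ((r ^ 2 : ℝ) : ℂ) - A + B := by
    rw [tform, hr2, hA, hB]
  rw [← hA] at Q3
  rw [← hB] at T3
  have him : (tform Q τ u u').im = B.im - A.im := by
    rw [ht, Complex.add_im, Complex.sub_im, Complex.ofReal_im]; ring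
  have hre : (tform Q τ u u').re = r ^ 2 - A.re + B.re := by
    rw [ht, Complex.add_re, Complex.sub_re, Complex.ofReal_re]
  have a1 := abs_le.1 (Complex.abs_re_le_norm A)
  have b1 := abs_le.1 (Complex.abs_re_le_norm B)
  have a2 := abs_le.1 (Complex.abs_im_le_norm A)
  have b2 := abs_le.1 (Complex.abs_im_le_norm B)
  refine le_trans (b := ‖A‖ + ‖B‖) ?_ (aux_arith _ r _ _ (stepL2 Q) (stepL1 τ) hq0 hs0 rfl hr0 (by linarith) ?_)
  · rw [him, abs_le]; constructor <;> linarith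
  · rw [hre]; linarith
end

section
/- Let Q, Qₙ ∈ L²_unif(ℝ) and τ, τₙ ∈ L¹_unif(ℝ), and set aₙ := 2( ‖Q − Qₙ‖_{L²_unif(ℝ)} + ‖τ − τₙ‖_{L¹_unif(ℝ)} ). Define for u ∈ H¹(ℝ) the forms t₀[u] := ∫_ℝ |u'|² − ∫_ℝ Q( conj(u') u + conj(u) u' ) + ∫_ℝ τ |u|² and tₙ[u] := ∫_ℝ |u'|² − ∫_ℝ Qₙ( conj(u') u + conj(u) u' ) + ∫_ℝ τₙ |u|². Then for every u ∈ H¹(ℝ): | tₙ[u] − t₀[u] | ≤ aₙ ‖u'‖²_{L²(ℝ)} + 4 aₙ ‖u‖²_{L²(ℝ)}. -/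
open MeasureTheory

lemma MeasureTheory.LocallyIntegrable.ii {E : Type*} [NormedAddCommGroup E] {f : ℝ → E}
    (hf : LocallyIntegrable f volume) {a b : ℝ} : IntervalIntegrable f volume a b :=
  (hf.integrableOn_isCompact isCompact_uIcc).intervalIntegrable

lemma MeasureTheory.LocallyIntegrable.nn {f : ℝ → ℂ}
    (hf : LocallyIntegrable f volume) : LocallyIntegrable (fun x => ‖f x‖) volume :=
  fun x => by
    obtain ⟨s, hs, h⟩ := hf x
    exact ⟨s, hs, h.norm⟩

lemma iadd {f g : ℝ → ℝ} {s : Set ℝ} (hf : IntegrableOn f s volume)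
    (hg : IntegrableOn g s volume) : IntegrableOn (fun x => f x + g x) s volume := hf.add hg

lemma h1_sup {u u' : ℝ → ℂ} (hu : InH1 u u') (a x : ℝ) (hx : x ∈ Set.Ioc a (a + 1/2)) :
    ‖u x‖ ^ 2 ≤ (∫ s in Set.Ioc a (a + 1/2), ‖u' s‖ ^ 2)
      + 4 * ∫ s in Set.Ioc a (a + 1/2), ‖u s‖ ^ 2 := by
  obtain ⟨h1, h2, h3, h4⟩ := hu
  have i3 : Integrable (fun s => ‖u s‖ ^ 2) := by
    simpa using h3.integrable_norm_pow (by norm_num)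
  have i4 : Integrable (fun s => ‖u' s‖ ^ 2) := by
    simpa using h4.integrable_norm_pow (by norm_num)
  set I := Set.Ioc a (a + 1/2) with hI
  have vol : volume.real I = 1/2 := by
    rw [hI, Real.volume_real_Ioc_of_le (by linarith)]; ring
  have volf : volume I ≠ ⊤ := by rw [hI]; exact measure_Ioc_lt_top.ne
  have iu' : IntegrableOn u' I :=
    (h1.integrableOn_isCompact (isCompact_Icc (a := a) (b := a+1/2))).mono_set
      Set.Ioc_subset_Icc_self
  set L := ∫ s in I, ‖u' s‖ with hL
  set A := ∫ s in I, ‖u' s‖ ^ 2 with hA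
  have cs : 2 * L ^ 2 ≤ A := by
    have : 0 ≤ ∫ s in I, (‖u' s‖ - 2 * L) ^ 2 := integral_nonneg fun _ => sq_nonneg _
    have e : ∫ s in I, (‖u' s‖ - 2 * L) ^ 2 = A - (4 * L) * L + 4 * L^2 * (1/2) := by
      have : (fun s => (‖u' s‖ - 2 * L) ^ 2)
        = fun s => (‖u' s‖ ^ 2 - (4 * L) * ‖u' s‖) + 4 * L ^ 2 := by
        ext s; ring
      rw [this, integral_add, integral_sub, integral_const_mul]
      · simp only [integral_const, measureReal_restrict_apply_univ, vol, smul_eq_mul]; ring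
      · exact i4.integrableOn
      · exact iu'.norm.const_mul _
      · exact i4.integrableOn.sub (iu'.norm.const_mul _)
      · exact integrableOn_const volf
    nlinarith
  have key : ∀ y ∈ I, ‖u x‖ ^ 2 ≤ 2 * ‖u y‖ ^ 2 + A := by
    intro y hy
    have e : u x - u y = ∫ s in y..x, u' s := by
      rw [h2 x, h2 y, ← intervalIntegral.integral_interval_sub_left (a := 0) (b := x) (c := y)
        (h1.ii) (h1.ii)]
      ring
    have b : ‖u x - u y‖ ≤ L := by
      rw [e]
      refine intervalIntegral.norm_integral_le_integral_norm_uIoc.trans ?_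
      refine setIntegral_mono_set iu'.norm (ae_of_all _ fun _ => norm_nonneg _) ?_
      refine LE.le.eventuallyLE ?_
      intro z hz
      rw [Set.uIoc, Set.mem_Ioc] at hz
      have : a ≤ min y x := le_min hy.1.le hx.1.le
      have : max y x ≤ a + 1/2 := max_le hy.2 hx.2
      exact ⟨by linarith [hz.1], by linarith [hz.2]⟩
    have t : ‖u x‖ ≤ ‖u y‖ + L := by
      have := norm_add_le (u x - u y) (u y)
      rw [sub_add_cancel] at this; linarith
    have : ‖u x‖ ^ 2 ≤ (‖u y‖ + L) ^ 2 := by gcongr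
    nlinarith [sq_nonneg (‖u y‖ - L)]
  have := setIntegral_mono_on (μ := volume) (s := I) (f := fun _ => ‖u x‖ ^ 2)
    (g := fun y => 2 * ‖u y‖ ^ 2 + A) (integrableOn_const volf)
    (iadd (i3.integrableOn.const_mul 2) (integrableOn_const volf)) measurableSet_Ioc key
  rw [integral_add (i3.integrableOn.const_mul 2) (integrableOn_const volf),
    integral_const_mul] at this
  simp only [integral_const, measureReal_restrict_apply_univ, vol, smul_eq_mul] at this
  linarith

lemma glue {f : ℝ → ℂ} {g : ℝ → ℝ} (hg : Integrable g)
    (hf : ∀ a : ℝ, IntegrableOn f (Set.Ioc a (a + 1/2)))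
    (h : ∀ a : ℝ, ∫ s in Set.Ioc a (a + 1/2), ‖f s‖ ≤ ∫ s in Set.Ioc a (a + 1/2), g s) :
    Integrable f ∧ ‖∫ x, f x‖ ≤ ∫ x, g x := by
  let I : ℤ → Set ℝ := fun k => Set.Ioc ((k:ℝ)/2) ((k:ℝ)/2 + 1/2)
  have hm : ∀ k, MeasurableSet (I k) := fun k => measurableSet_Ioc
  have hU : (⋃ k, I k) = Set.univ := by
    refine Set.eq_univ_of_forall fun x => Set.mem_iUnion.2 ⟨⌈2 * x⌉ - 1, ?_⟩
    have h1 := Int.le_ceil (2 * x)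
    have h2 := Int.ceil_lt_add_one (2 * x)
    simp only [I, Set.mem_Ioc]
    push_cast
    constructor <;> linarith
  have hd : Pairwise (Function.onFun Disjoint I) := by
    intro i j hij
    refine Set.disjoint_left.2 fun x hx hy => hij ?_
    simp only [I, Set.mem_Ioc] at hx hy
    have h1 : (i:ℝ) < j + 1 := by linarith
    have h2 : (j:ℝ) < i + 1 := by linarith
    have h1' : i < j + 1 := by exact_mod_cast h1
    have h2' : j < i + 1 := by exact_mod_cast h2
    omega
  have sg : HasSum (fun k => ∫ s in I k, g s) (∫ x, g x) := by
    have := hasSum_integral_iUnion (μ := volume) hm hd (f := g) hg.integrableOn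
    rwa [hU, setIntegral_univ] at this
  have sf : Summable (fun k => ∫ s in I k, ‖f s‖) :=
    Summable.of_nonneg_of_le (fun k => integral_nonneg fun _ => norm_nonneg _)
      (fun k => h _) sg.summable
  have fi : Integrable f := by
    rw [← integrableOn_univ, ← hU]
    exact integrableOn_iUnion_of_summable_integral_norm (fun k => hf _) sf
  refine ⟨fi, (norm_integral_le_integral_norm _).trans ?_⟩
  have := hasSum_integral_iUnion (μ := volume) hm hd (f := fun x => ‖f x‖) fi.norm.integrableOn
  rw [hU, setIntegral_univ] at this
  exact hasSum_le (fun k => h _) this sg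

lemma half_le {f : ℝ → ℝ} (hf : LocallyIntegrable f) (h0 : ∀ x, 0 ≤ f x)
    (hb : BddAbove (Set.range fun t : ℝ => ∫ s in t..(t + 1), f s)) (a : ℝ) :
    IntegrableOn f (Set.Ioc a (a + 1/2)) ∧
    ∫ s in Set.Ioc a (a + 1/2), f s ≤ ⨆ t : ℝ, ∫ s in t..(t + 1), f s := by
  have i1 : IntegrableOn f (Set.Ioc a (a + 1)) :=
    (hf.integrableOn_isCompact (isCompact_Icc (a := a) (b := a+1))).mono_set
      Set.Ioc_subset_Icc_self
  have sub : Set.Ioc a (a + 1/2) ⊆ Set.Ioc a (a + 1) :=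
    Set.Ioc_subset_Ioc_right (by linarith)
  refine ⟨i1.mono_set sub, le_trans ?_ (le_ciSup hb a)⟩
  rw [intervalIntegral.integral_of_le (by linarith)]
  exact setIntegral_mono_set i1 (ae_of_all _ h0) (LE.le.eventuallyLE sub)

lemma tau_term {τ u u' : ℝ → ℂ} (hτ : InStepL1 τ) (hu : InH1 u u') :
    Integrable (fun x => τ x * (‖u x‖ : ℂ) ^ 2) ∧
    ‖∫ x, τ x * (‖u x‖ : ℂ) ^ 2‖ ≤
      stepL1 τ * ((∫ x, ‖u' x‖ ^ 2) + 4 * ∫ x, ‖u x‖ ^ 2) := by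
  have hsup := fun a x hx => h1_sup hu a x hx
  obtain ⟨h1, h2, h3, h4⟩ := hu
  have i3 : Integrable (fun s => ‖u s‖ ^ 2) := by
    simpa using h3.integrable_norm_pow (by norm_num)
  have i4 : Integrable (fun s => ‖u' s‖ ^ 2) := by
    simpa using h4.integrable_norm_pow (by norm_num)
  have hh := half_le (f := fun s => ‖τ s‖) hτ.1.nn (fun _ => norm_nonneg _) hτ.2
  have mf : AEStronglyMeasurable (fun x => τ x * (‖u x‖ : ℂ) ^ 2) := by
    refine hτ.1.aestronglyMeasurable.mul ?_
    exact (Complex.continuous_ofReal.comp_aestronglyMeasurable h3.1.norm).pow 2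
  have bd : ∀ a, ∀ x ∈ Set.Ioc a (a + 1/2), ‖τ x * (‖u x‖ : ℂ) ^ 2‖ ≤
      ((∫ s in Set.Ioc a (a + 1/2), ‖u' s‖ ^ 2)
      + 4 * ∫ s in Set.Ioc a (a + 1/2), ‖u s‖ ^ 2) * ‖τ x‖ := by
    intro a x hx
    have := hsup a x hx
    rw [norm_mul, norm_pow, Complex.norm_real, norm_norm, mul_comm]
    gcongr
  have hf : ∀ a : ℝ, IntegrableOn (fun x => τ x * (‖u x‖ : ℂ) ^ 2) (Set.Ioc a (a + 1/2)) := by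
    intro a
    refine Integrable.mono' ((hh a).1.const_mul ((∫ s in Set.Ioc a (a + 1/2), ‖u' s‖ ^ 2)
      + 4 * ∫ s in Set.Ioc a (a + 1/2), ‖u s‖ ^ 2)) mf.restrict ?_
    exact (ae_restrict_mem measurableSet_Ioc).mono fun x hx => bd a x hx
  have := glue (f := fun x => τ x * (‖u x‖ : ℂ) ^ 2)
    (g := fun x => stepL1 τ * (‖u' x‖ ^ 2 + 4 * ‖u x‖ ^ 2))
    ((i4.add (i3.const_mul 4)).const_mul _) hf ?_
  · rwa [integral_const_mul, integral_add i4 (i3.const_mul 4), integral_const_mul] at this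
  · intro a
    rw [integral_const_mul, integral_add i4.integrableOn (i3.integrableOn.const_mul 4),
      integral_const_mul]
    refine (setIntegral_mono_on (hf a).norm ((hh a).1.const_mul _) measurableSet_Ioc
      (bd a)).trans ?_
    rw [integral_const_mul, mul_comm]
    have h0 : 0 ≤ (∫ s in Set.Ioc a (a + 1/2), ‖u' s‖ ^ 2)
      + 4 * ∫ s in Set.Ioc a (a + 1/2), ‖u s‖ ^ 2 := by positivity
    exact mul_le_mul_of_nonneg_right (hh a).2 h0

lemma q_term {P u u' : ℝ → ℂ} (hP : InStepL2 P) (hu : InH1 u u') :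
    Integrable (fun x => P x * ((starRingEnd ℂ) (u' x) * u x + (starRingEnd ℂ) (u x) * u' x)) ∧
    ‖∫ x, P x * ((starRingEnd ℂ) (u' x) * u x + (starRingEnd ℂ) (u x) * u' x)‖ ≤
      stepL2 P * (2 * (∫ x, ‖u' x‖ ^ 2) + 4 * ∫ x, ‖u x‖ ^ 2) := by
  have hsup := fun a x hx => h1_sup hu a x hx
  obtain ⟨h1, h2, h3, h4⟩ := hu
  have i3 : Integrable (fun s => ‖u s‖ ^ 2) := by
    simpa using h3.integrable_norm_pow (by norm_num)
  have i4 : Integrable (fun s => ‖u' s‖ ^ 2) := by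
    simpa using h4.integrable_norm_pow (by norm_num)
  have hh := half_le (f := fun s => ‖P s‖ ^ 2) hP.2.1 (fun _ => by positivity) hP.2.2
  set f := fun x => P x * ((starRingEnd ℂ) (u' x) * u x + (starRingEnd ℂ) (u x) * u' x) with hfd
  have mf : AEStronglyMeasurable f := by
    refine hP.1.mul (AEStronglyMeasurable.add ?_ ?_)
    · exact (Complex.continuous_conj.comp_aestronglyMeasurable h4.1).mul h3.1
    · exact (Complex.continuous_conj.comp_aestronglyMeasurable h3.1).mul h4.1
  have main : ∀ s, stepL2 P < s → Integrable f ∧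
      ‖∫ x, f x‖ ≤ s * (2 * (∫ x, ‖u' x‖ ^ 2) + 4 * ∫ x, ‖u x‖ ^ 2) := by
    intro s hs
    have s0 : 0 < s := lt_of_le_of_lt (Real.sqrt_nonneg _) hs
    have hs2 : (⨆ t : ℝ, ∫ s in t..(t + 1), ‖P s‖ ^ 2) ≤ s ^ 2 :=
      ((Real.sqrt_lt' s0).1 hs).le
    have bd : ∀ a, ∀ x ∈ Set.Ioc a (a + 1/2), ‖f x‖ ≤
      (((∫ s in Set.Ioc a (a + 1/2), ‖u' s‖ ^ 2)
      + 4 * ∫ s in Set.Ioc a (a + 1/2), ‖u s‖ ^ 2) / s) * ‖P x‖ ^ 2 + s * ‖u' x‖ ^ 2 := by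
      intro a x hx
      have := hsup a x hx
      have e1 : ‖f x‖ ≤ 2 * (‖P x‖ * ‖u x‖) * ‖u' x‖ := by
        rw [hfd]
        simp only
        rw [norm_mul]
        have := norm_add_le ((starRingEnd ℂ) (u' x) * u x) ((starRingEnd ℂ) (u x) * u' x)
        rw [norm_mul, norm_mul, RCLike.norm_conj, RCLike.norm_conj] at this
        nlinarith [mul_le_mul_of_nonneg_left this (norm_nonneg (P x))]
      have e2 : 2 * (‖P x‖ * ‖u x‖) * ‖u' x‖ ≤ (‖u x‖ ^ 2 / s) * ‖P x‖ ^ 2 + s * ‖u' x‖ ^ 2 := by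
        have : (‖u x‖ ^ 2 / s) * ‖P x‖ ^ 2 + s * ‖u' x‖ ^ 2 - 2 * (‖P x‖ * ‖u x‖) * ‖u' x‖
          = (‖P x‖ * ‖u x‖ - s * ‖u' x‖) ^ 2 / s := by field_simp; ring
        have : 0 ≤ (‖P x‖ * ‖u x‖ - s * ‖u' x‖) ^ 2 / s := by positivity
        linarith
      refine e1.trans (e2.trans ?_)
      gcongr
    have hf : ∀ a : ℝ, IntegrableOn f (Set.Ioc a (a + 1/2)) := by
      intro a
      refine Integrable.mono' (iadd ((hh a).1.const_mul (((∫ s in Set.Ioc a (a + 1/2), ‖u' s‖ ^ 2)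
        + 4 * ∫ s in Set.Ioc a (a + 1/2), ‖u s‖ ^ 2) / s)) (i4.integrableOn.const_mul s))
        mf.restrict ?_
      exact (ae_restrict_mem measurableSet_Ioc).mono fun x hx => bd a x hx
    have := glue (f := f)
      (g := fun x => s * (2 * ‖u' x‖ ^ 2 + 4 * ‖u x‖ ^ 2))
      (((i4.const_mul 2).add (i3.const_mul 4)).const_mul _) hf ?_
    · rwa [integral_const_mul, integral_add (i4.const_mul 2) (i3.const_mul 4),
        integral_const_mul, integral_const_mul] at this
    · intro a
      rw [integral_const_mul, integral_add (i4.integrableOn.const_mul 2)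
        (i3.integrableOn.const_mul 4), integral_const_mul, integral_const_mul]
      refine (setIntegral_mono_on (hf a).norm
        (iadd ((hh a).1.const_mul _) (i4.integrableOn.const_mul s)) measurableSet_Ioc
        (bd a)).trans ?_
      rw [integral_add ((hh a).1.const_mul _) (i4.integrableOn.const_mul s),
        integral_const_mul, integral_const_mul]
      have h0 : 0 ≤ (∫ s in Set.Ioc a (a + 1/2), ‖u' s‖ ^ 2)
        + 4 * ∫ s in Set.Ioc a (a + 1/2), ‖u s‖ ^ 2 := by positivity
      have h5 := mul_le_mul_of_nonneg_left ((hh a).2.trans hs2) (div_nonneg h0 s0.le)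
      refine (add_le_add_left h5 _).trans (le_of_eq ?_)
      field_simp
      ring
  refine ⟨(main _ (lt_add_one _)).1, ?_⟩
  have hC : 0 ≤ 2 * (∫ x, ‖u' x‖ ^ 2) + 4 * ∫ x, ‖u x‖ ^ 2 := by positivity
  refine ge_of_tendsto (f := fun s => s * (2 * (∫ x, ‖u' x‖ ^ 2) + 4 * ∫ x, ‖u x‖ ^ 2))
    (x := nhdsWithin (stepL2 P) (Set.Ioi (stepL2 P))) ?_
    (Filter.eventually_of_mem self_mem_nhdsWithin fun s hs => (main s hs).2)
  exact ((continuous_id.mul continuous_const).tendsto _).mono_left nhdsWithin_le_nhds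

lemma InStepL1.sub' {f g : ℝ → ℂ} (hf : InStepL1 f) (hg : InStepL1 g) :
    InStepL1 (fun x => f x - g x) := by
  refine ⟨hf.1.sub hg.1, ?_⟩
  obtain ⟨A, hA⟩ := hf.2
  obtain ⟨B, hB⟩ := hg.2
  refine ⟨A + B, ?_⟩
  rintro _ ⟨t, rfl⟩
  have a := hA ⟨t, rfl⟩
  have b := hB ⟨t, rfl⟩
  simp only at a b ⊢
  refine le_trans ?_ (add_le_add a b)
  rw [← intervalIntegral.integral_add hf.1.nn.ii hg.1.nn.ii]
  exact intervalIntegral.integral_mono_on (by linarith)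
    (hf.1.sub hg.1).nn.ii
    (hf.1.nn.ii.add hg.1.nn.ii)
    fun x _ => norm_sub_le _ _

lemma InStepL2.sub' {f g : ℝ → ℂ} (hf : InStepL2 f) (hg : InStepL2 g) :
    InStepL2 (fun x => f x - g x) := by
  have bd : ∀ x, ‖f x - g x‖ ^ 2 ≤ 2 * ‖f x‖ ^ 2 + 2 * ‖g x‖ ^ 2 := by
    intro x
    have := norm_sub_le (f x) (g x)
    have : ‖f x - g x‖ ^ 2 ≤ (‖f x‖ + ‖g x‖) ^ 2 := by gcongr
    nlinarith [sq_nonneg (‖f x‖ - ‖g x‖)]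
  have li : LocallyIntegrable (fun x => 2 * ‖f x‖ ^ 2 + 2 * ‖g x‖ ^ 2) :=
    (hf.2.1.smul (2:ℝ)).add (hg.2.1.smul (2:ℝ))
  have ld : LocallyIntegrable (fun x => ‖f x - g x‖ ^ 2) := by
    refine li.mono ((hf.1.sub hg.1).norm.pow 2) (ae_of_all _ fun x => ?_)
    rw [Real.norm_of_nonneg (by positivity), Real.norm_of_nonneg (by positivity)]
    exact bd x
  refine ⟨hf.1.sub hg.1, ld, ?_⟩
  obtain ⟨A, hA⟩ := hf.2.2
  obtain ⟨B, hB⟩ := hg.2.2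
  refine ⟨2 * A + 2 * B, ?_⟩
  rintro _ ⟨t, rfl⟩
  have a := hA ⟨t, rfl⟩
  have b := hB ⟨t, rfl⟩
  simp only at a b ⊢
  refine (intervalIntegral.integral_mono_on (by linarith)
    ld.ii li.ii fun x _ => bd x).trans ?_
  rw [intervalIntegral.integral_add (hf.2.1.ii.const_mul 2)
    (hg.2.1.ii.const_mul 2), intervalIntegral.integral_const_mul,
    intervalIntegral.integral_const_mul]
  linarith

/-- Approximation estimate: with `aₙ = 2(‖Q - Qₙ‖_{L²_unif} + ‖τ - τₙ‖_{L¹_unif})`, the forms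
satisfy `|tₙ[u] - t₀[u]| ≤ aₙ‖u'‖² + 4aₙ‖u‖²` for all `u ∈ H¹(ℝ)`. -/
theorem tform_approximation (Q Qn τ τn u u' : ℝ → ℂ)
    (hQ : InStepL2 Q) (hQn : InStepL2 Qn) (hτ : InStepL1 τ) (hτn : InStepL1 τn)
    (hu : InH1 u u') :
    ‖tform Qn τn u u' - tform Q τ u u'‖ ≤
      2 * (stepL2 (fun x => Q x - Qn x) + stepL1 (fun x => τ x - τn x))
          * (∫ x : ℝ, ‖u' x‖ ^ 2)
        + 4 * (2 * (stepL2 (fun x => Q x - Qn x) + stepL1 (fun x => τ x - τn x)))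
          * (∫ x : ℝ, ‖u x‖ ^ 2) := by
  have q0 := (q_term hQ hu).1
  have qn := (q_term hQn hu).1
  have t0 := (tau_term hτ hu).1
  have tn := (tau_term hτn hu).1
  have qd := (q_term (hQ.sub' hQn) hu).2
  have td := (tau_term (hτ.sub' hτn) hu).2
  have e : tform Qn τn u u' - tform Q τ u u' =
      (∫ x, (Q x - Qn x) * ((starRingEnd ℂ) (u' x) * u x + (starRingEnd ℂ) (u x) * u' x))
      - ∫ x, (τ x - τn x) * (‖u x‖ : ℂ) ^ 2 := by
    simp only [sub_mul]
    rw [integral_sub q0 qn, integral_sub t0 tn, tform, tform]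
    ring
  rw [e]
  refine (norm_sub_le _ _).trans ((add_le_add qd td).trans ?_)
  have s2 : 0 ≤ stepL2 (fun x => Q x - Qn x) := Real.sqrt_nonneg _
  have s1 : 0 ≤ stepL1 (fun x => τ x - τn x) := Real.iSup_nonneg fun t =>
    intervalIntegral.integral_nonneg (by linarith) fun _ _ => norm_nonneg _
  have hA : 0 ≤ ∫ x, ‖u' x‖ ^ 2 := by positivity
  have hB : 0 ≤ ∫ x, ‖u x‖ ^ 2 := by positivity
  nlinarith [mul_nonneg s2 hA, mul_nonneg s2 hB, mul_nonneg s1 hA, mul_nonneg s1 hB]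
end

section
/- Let Q ∈ L²_loc(ℝ,ℂ), τ ∈ L¹_loc(ℝ,ℂ). Let u, w, v, z : ℝ → ℂ be locally absolutely continuous functions such that a.e. u' = w + Qu and v' = z + conj(Q)·v, and define a.e. l[u] := −w' − Q·u' + τ·u and l⁺[v] := −( z' + conj(Q)·z + (conj(Q)² − conj(τ))·v ). Suppose u, v, l[u], l⁺[v] all belong to L²(ℝ). Then both limits lim_{t→−∞} [u,v](t) and lim_{t→+∞} [u,v](t) exist and are finite, where [u,v](t) := u(t)·conj(z(t)) − w(t)·conj(v(t)). -/
open MeasureTheory Filter Topology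

/-- The Shin–Zettl quasi-differential expression `l[u] = -(u^{[1]})' - Q u' + τ u`,
written in terms of the quasi-derivative `w = u^{[1]} = u' - Qu` (so that `u' = w + Qu`)
and the a.e. derivative `dw` of `w`. -/
noncomputable def qdL (Q τ u w dw : ℝ → ℂ) (x : ℝ) : ℂ :=
  -dw x - Q x * (w x + Q x * u x) + τ x * u x

/-- The formally adjoint quasi-differential expression
`l⁺[v] = -( (v^{{1}})' + conj(Q) v^{{1}} + (conj(Q)² - conj(τ)) v )`, written in terms of
the adjoint quasi-derivative `z = v^{{1}} = v' - conj(Q)v` and the a.e. derivative `dz`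
of `z`. -/
noncomputable def qdLplus (Q τ v z dz : ℝ → ℂ) (x : ℝ) : ℂ :=
  -(dz x + (starRingEnd ℂ) (Q x) * z x
      + (((starRingEnd ℂ) (Q x)) ^ 2 - (starRingEnd ℂ) (τ x)) * v x)

/-- The bracket `[u,v](t) = u(t) conj(v^{{1}}(t)) - u^{[1]}(t) conj(v(t))`. -/
noncomputable def qdBracket (u w v z : ℝ → ℂ) (t : ℝ) : ℂ :=
  u t * (starRingEnd ℂ) (z t) - w t * (starRingEnd ℂ) (v t)

theorem ac_of_norm_aux {f g : ℝ → ℂ} {a b : ℝ} (hfg : ∀ x y, dist (f x) (f y) = dist (g x) (g y))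
    (hg : AbsolutelyContinuousOnInterval g a b) : AbsolutelyContinuousOnInterval f a b := by
  rw [absolutelyContinuousOnInterval_iff] at hg ⊢
  simpa only [hfg] using hg

theorem ac_integral_aux {f df : ℝ → ℂ} (hdf : LocallyIntegrable df volume)
    (hf : ∀ x : ℝ, f x = f 0 + ∫ s in (0:ℝ)..x, df s) (a b : ℝ) :
    AbsolutelyContinuousOnInterval f a b := by
  have hI : ∀ a b, IntervalIntegrable df volume a b := fun a b =>
    intervalIntegrable_iff.mpr ((hdf.integrableOn_isCompact isCompact_uIcc).mono_set
      Set.uIoc_subset_uIcc)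
  have hg := ((hI a b).norm).absolutelyContinuousOnInterval_intervalIntegral
    (c := a) (by simp)
  rw [absolutelyContinuousOnInterval_iff] at hg ⊢
  intro ε hε
  obtain ⟨δ, hδ, H⟩ := hg ε hε
  refine ⟨δ, hδ, fun E hE hs => lt_of_le_of_lt (Finset.sum_le_sum fun i _ => ?_) (H E hE hs)⟩
  rw [dist_comm, dist_comm (∫ _ in _.._, _), dist_eq_norm, dist_eq_norm, hf (E.2 i).1,
    hf (E.2 i).2, add_sub_add_left_eq_sub,
    intervalIntegral.integral_interval_sub_left (hI _ _) (hI _ _),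
    intervalIntegral.integral_interval_sub_left (hI _ _).norm (hI _ _).norm, Real.norm_eq_abs]
  exact intervalIntegral.norm_integral_le_abs_integral_norm

theorem deriv_aux {f df : ℝ → ℂ} (hdf : LocallyIntegrable df volume)
    (hf : ∀ x : ℝ, f x = f 0 + ∫ s in (0:ℝ)..x, df s) :
    ∀ᵐ x, HasDerivAt f (df x) x := by
  filter_upwards [_root_.LocallyIntegrable.ae_hasDerivAt_integral hdf] with x hx
  rw [show f = fun x => f 0 + ∫ s in (0:ℝ)..x, df s from funext hf]
  exact (hx 0).const_add _

/-- If `u, v, l[u], l⁺[v]` are all square integrable, then the bracket `[u,v](t)` has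
finite limits as `t → -∞` and `t → +∞`. -/
theorem bracket_limits_exist (Q τ u w v z dw dz : ℝ → ℂ)
    (hQmeas : AEStronglyMeasurable Q volume)
    (hQ : LocallyIntegrable (fun s => ‖Q s‖ ^ 2) volume)
    (hτ : LocallyIntegrable τ volume)
    (hu' : LocallyIntegrable (fun s => w s + Q s * u s) volume)
    (hu : ∀ x : ℝ, u x = u 0 + ∫ s in (0:ℝ)..x, (w s + Q s * u s))
    (hv' : LocallyIntegrable (fun s => z s + (starRingEnd ℂ) (Q s) * v s) volume)
    (hv : ∀ x : ℝ, v x = v 0 + ∫ s in (0:ℝ)..x, (z s + (starRingEnd ℂ) (Q s) * v s))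
    (hdw : LocallyIntegrable dw volume)
    (hw : ∀ x : ℝ, w x = w 0 + ∫ s in (0:ℝ)..x, dw s)
    (hdz : LocallyIntegrable dz volume)
    (hz : ∀ x : ℝ, z x = z 0 + ∫ s in (0:ℝ)..x, dz s)
    (huL2 : MemLp u 2 volume) (hvL2 : MemLp v 2 volume)
    (hluL2 : MemLp (qdL Q τ u w dw) 2 volume)
    (hlvL2 : MemLp (qdLplus Q τ v z dz) 2 volume) :
    (∃ L : ℂ, Tendsto (qdBracket u w v z) atBot (𝓝 L)) ∧
      (∃ L : ℂ, Tendsto (qdBracket u w v z) atTop (𝓝 L)) := by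
  have hiu : Integrable (fun x => qdL Q τ u w dw x * (starRingEnd ℂ) (v x)) volume :=
    hluL2.integrable_mul hvL2.star
  have hiv : Integrable (fun x => u x * (starRingEnd ℂ) (qdLplus Q τ v z dz x)) volume :=
    huL2.integrable_mul hlvL2.star
  set h : ℝ → ℂ := fun x => qdL Q τ u w dw x * (starRingEnd ℂ) (v x)
    - u x * (starRingEnd ℂ) (qdLplus Q τ v z dz x) with hh
  have hi : Integrable h volume := hiu.sub hiv
  have hconj : ∀ {f : ℝ → ℂ} {a b : ℝ}, AbsolutelyContinuousOnInterval f a b →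
      AbsolutelyContinuousOnInterval (fun x => (starRingEnd ℂ) (f x)) a b := fun hf =>
    ac_of_norm_aux (fun x y => by rw [Complex.dist_conj_conj]) hf
  have key : ∀ t, qdBracket u w v z t = qdBracket u w v z 0 + ∫ s in (0:ℝ)..t, h s := by
    intro t
    have acI : AbsolutelyContinuousOnInterval (fun x => ∫ s in (0:ℝ)..x, h s) 0 t :=
      ac_integral_aux hi.locallyIntegrable (by simp) 0 t
    have ac : AbsolutelyContinuousOnInterval
        (fun x => qdBracket u w v z x - ∫ s in (0:ℝ)..x, h s) 0 t :=
      (((ac_integral_aux hu' hu 0 t).smul (hconj (ac_integral_aux hdz hz 0 t))).sub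
        ((ac_integral_aux hdw hw 0 t).smul (hconj (ac_integral_aux hv' hv 0 t)))).sub acI
    obtain ⟨C, hC⟩ := ac.const_of_ae_hasDerivAt_zero (by
      filter_upwards [deriv_aux hu' hu, deriv_aux hv' hv, deriv_aux hdw hw, deriv_aux hdz hz,
        _root_.LocallyIntegrable.ae_hasDerivAt_integral hi.locallyIntegrable] with x h1 h2 h3 h4 h5 _
      have := ((h1.mul h4.star).sub (h3.mul h2.star)).sub (h5 0)
      refine HasDerivAt.congr_deriv this ?_
      simp only [hh, qdL, qdLplus, ← starRingEnd_apply, map_add, map_mul, map_neg, map_sub, map_pow,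
        Complex.conj_conj]
      ring)
    have e0 := hC 0 (by simp)
    have et := hC t (by simp)
    simp only [intervalIntegral.integral_same, sub_zero] at e0
    rw [e0, ← et]; ring
  rw [show qdBracket u w v z = fun t => qdBracket u w v z 0 + ∫ s in (0:ℝ)..t, h s from
    funext key]
  refine ⟨⟨qdBracket u w v z 0 + -∫ x in Set.Iic 0, h x, ?_⟩, ⟨_, (intervalIntegral_tendsto_integral_Ioi 0 hi.integrableOn
    tendsto_id).const_add _⟩⟩
  · have := (intervalIntegral_tendsto_integral_Iic 0 hi.integrableOn tendsto_id).neg.const_add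
      (qdBracket u w v z 0)
    simpa only [← intervalIntegral.integral_symm, id] using this
end
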